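/- arXiv:1509.04900 — 5 statements merged into one kernel-verified Lean document; each statement's English description precedes it below -/
import Mathlib

section
/- For every integer k ≥ 0, the Hausdorff dimension of U_{2^k} equals the Hausdorff dimension of U_1, and this common value is log(2 + √2)/(−log λ). -/
open Filter Topology

/-- `codingApprox f i n = f (i 0) (f (i 1) (⋯ (f (i (n-1)) 0)))`, i.e. the `n`-th
approximation `f_{i_1} ∘ ⋯ ∘ f_{i_n} (0)` of the point coded by `i`. -/
noncomputable def codingApprox (f : Fin 4 → ℝ → ℝ) : (ℕ → Fin 4) → ℕ → ℝ
  | _, 0 => 0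
  | i, n + 1 => f (i 0) (codingApprox f (fun k => i (k + 1)) n)

/-- The set of codings of `x` for the IFS `f`. -/
def codings (f : Fin 4 → ℝ → ℝ) (x : ℝ) : Set (ℕ → Fin 4) :=
  {i | Tendsto (codingApprox f i) atTop (𝓝 x)}

/-! ### Symbolic coding -/

/-- The translation parts of the four maps. -/
noncomputable def dg (lam : ℝ) : Fin 4 → ℝ := ![0, 2 * lam, 3 * lam - lam ^ 2, 1 - lam]

/-- The point coded by `i`. -/
noncomputable def ptOf (lam : ℝ) (i : ℕ → Fin 4) : ℝ := ∑' k, lam ^ k * dg lam (i k)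

/-- The left shift. -/
def shf (i : ℕ → Fin 4) : ℕ → Fin 4 := fun k => i (k + 1)

/-- Prepend a digit. -/
def cns (b : Fin 4) (i : ℕ → Fin 4) : ℕ → Fin 4
  | 0 => b
  | n + 1 => i n

/-- Allowed transitions: the words `24` and `31` are forbidden. -/
def okk (a b : Fin 4) : Prop := ¬ (a = 1 ∧ b = 3) ∧ ¬ (a = 2 ∧ b = 0)

instance (a b : Fin 4) : Decidable (okk a b) := by unfold okk; infer_instance

/-- Admissible sequences. -/
def Adm (i : ℕ → Fin 4) : Prop := ∀ n, okk (i n) (i (n + 1))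

/-- Working form of the hypothesis on `lam`. -/
structure Hyp (lam : ℝ) : Prop where
  pos : 0 < lam
  quarter : lam < 1 / 4
  gap : 0 < 1 - 5 * lam + lam ^ 2

lemma hyp_of {lam : ℝ} (hlam : 0 < lam ∧ lam < (5 - Real.sqrt 21) / 2) : Hyp lam := by
  obtain ⟨h0, h1⟩ := hlam
  have hs : Real.sqrt 21 ^ 2 = 21 := Real.sq_sqrt (by norm_num)
  have hs0 : (0:ℝ) ≤ Real.sqrt 21 := Real.sqrt_nonneg _
  have h45 : (4.5:ℝ) ≤ Real.sqrt 21 := by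
    apply Real.le_sqrt_of_sq_le; norm_num
  refine ⟨h0, by linarith, ?_⟩
  nlinarith

lemma shf_cns (b : Fin 4) (i : ℕ → Fin 4) : shf (cns b i) = i := rfl

lemma cns_shf (i : ℕ → Fin 4) : cns (i 0) (shf i) = i := by
  funext n; cases n <;> rfl

lemma cns_inj (b : Fin 4) : Function.Injective (cns b) := fun i j h => by
  have := congrArg shf h
  simpa [shf_cns] using this

lemma Adm.shf {i : ℕ → Fin 4} (h : Adm i) : Adm (shf i) := fun n => h (n + 1)

lemma dg_nonneg {lam : ℝ} (H : Hyp lam) (b : Fin 4) : 0 ≤ dg lam b := by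
  have h0 := H.pos; have h1 := H.quarter
  fin_cases b <;> simp [dg] <;> nlinarith

lemma dg_le {lam : ℝ} (H : Hyp lam) (b : Fin 4) : dg lam b ≤ 1 - lam := by
  have h0 := H.pos; have h1 := H.quarter; have h2 := H.gap
  fin_cases b <;> simp [dg] <;> nlinarith

lemma summ {lam : ℝ} (H : Hyp lam) (i : ℕ → Fin 4) :
    Summable (fun k => lam ^ k * dg lam (i k)) := by
  have h0 := H.pos; have h1 := H.quarter
  have hg : Summable (fun k => lam ^ k * (1 - lam)) :=
    (summable_geometric_of_lt_one h0.le (by linarith)).mul_right _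
  refine Summable.of_nonneg_of_le (fun k => ?_) (fun k => ?_) hg
  · exact mul_nonneg (by positivity) (dg_nonneg H _)
  · exact mul_le_mul_of_nonneg_left (dg_le H _) (by positivity)

lemma pt_nonneg {lam : ℝ} (H : Hyp lam) (i : ℕ → Fin 4) : 0 ≤ ptOf lam i :=
  tsum_nonneg fun k => mul_nonneg (pow_nonneg H.pos.le _) (dg_nonneg H _)

lemma pt_le {lam : ℝ} (H : Hyp lam) (i : ℕ → Fin 4) : ptOf lam i ≤ 1 := by
  have h0 := H.pos; have h1 := H.quarter
  have hg := (hasSum_geometric_of_lt_one h0.le (by linarith : lam < 1)).mul_right (1 - lam)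
  have : (1 - lam)⁻¹ * (1 - lam) = 1 := inv_mul_cancel₀ (by linarith)
  rw [this] at hg
  exact hasSum_le (fun k => mul_le_mul_of_nonneg_left (dg_le H (i k)) (by positivity))
    (summ H i).hasSum hg

lemma pt_step {lam : ℝ} (H : Hyp lam) (i : ℕ → Fin 4) :
    ptOf lam i = dg lam (i 0) + lam * ptOf lam (shf i) := by
  unfold ptOf
  rw [(summ H i).tsum_eq_zero_add, ← tsum_mul_left]
  simp only [pow_zero, one_mul, shf]
  congr 1
  apply tsum_congr
  intro k; ring

lemma pt_cns {lam : ℝ} (H : Hyp lam) (b : Fin 4) (i : ℕ → Fin 4) :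
    ptOf lam (cns b i) = dg lam b + lam * ptOf lam i := by
  rw [pt_step H, shf_cns]; rfl

lemma capprox (lam : ℝ) (f : Fin 4 → ℝ → ℝ) (hf : ∀ b x, f b x = lam * x + dg lam b) (n : ℕ) :
    ∀ i, codingApprox f i n = ∑ k ∈ Finset.range n, lam ^ k * dg lam (i k) := by
  induction n with
  | zero => intro i; simp [codingApprox]
  | succ n ih =>
    intro i
    rw [codingApprox, hf, ih, Finset.sum_range_succ', Finset.mul_sum]
    simp only [pow_zero, one_mul]
    congr 1
    apply Finset.sum_congr rfl
    intro k _; ring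

/-- The set of codings in terms of `ptOf`. -/
def cod (lam : ℝ) (x : ℝ) : Set (ℕ → Fin 4) := {i | ptOf lam i = x}

lemma codings_eq {lam : ℝ} (H : Hyp lam) (f : Fin 4 → ℝ → ℝ)
    (hf : ∀ b x, f b x = lam * x + dg lam b) (x : ℝ) : codings f x = cod lam x := by
  ext i
  have hT : Tendsto (codingApprox f i) atTop (𝓝 (ptOf lam i)) := by
    have := (summ H i).hasSum.tendsto_sum_nat
    refine this.congr fun n => ?_
    rw [capprox lam f hf]
  constructor
  · intro h
    exact tendsto_nhds_unique hT h
  · intro h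
    have h' : ptOf lam i = x := h
    rw [h'] at hT
    exact hT

/-- Every coded point lies in the attractor. -/
lemma pt_mem {lam : ℝ} (H : Hyp lam) (f : Fin 4 → ℝ → ℝ)
    (hf : ∀ b x, f b x = lam * x + dg lam b) (K : Set ℝ) (hKne : K.Nonempty) (hKc : IsClosed K)
    (hK : ∀ b, ∀ x ∈ K, f b x ∈ K) (i : ℕ → Fin 4) : ptOf lam i ∈ K := by
  obtain ⟨y, hy⟩ := hKne
  have h0 := H.pos; have h1 := H.quarter
  have key : ∀ n (i : ℕ → Fin 4),
      (∑ k ∈ Finset.range n, lam ^ k * dg lam (i k)) + lam ^ n * y ∈ K := by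
    intro n
    induction n with
    | zero => intro i; simpa using hy
    | succ n ih =>
      intro i
      have := hK (i 0) _ (ih (shf i))
      rw [hf] at this
      convert this using 1
      rw [Finset.sum_range_succ', mul_add, Finset.mul_sum]
      simp only [pow_zero, one_mul, shf]
      have : ∀ k, lam ^ (k+1) * dg lam (i (k+1)) = lam * (lam ^ k * dg lam (i (k+1))) := by
        intro k; ring
      simp only [this]
      ring
  have hT : Tendsto (fun n => (∑ k ∈ Finset.range n, lam ^ k * dg lam (i k)) + lam ^ n * y)
      atTop (𝓝 (ptOf lam i + 0 * y)) :=
    (summ H i).hasSum.tendsto_sum_nat.add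
      ((tendsto_pow_atTop_nhds_zero_of_lt_one h0.le (by linarith)).mul_const y)
  have := hKc.mem_of_tendsto hT (Eventually.of_forall fun n => key n i)
  simpa using this

/-! ### Separation -/

lemma pt_bd {lam : ℝ} (H : Hyp lam) (i : ℕ → Fin 4) :
    dg lam (i 0) ≤ ptOf lam i ∧ ptOf lam i ≤ dg lam (i 0) + lam := by
  rw [pt_step H]
  have h0 := H.pos
  have h1 := pt_nonneg H (shf i)
  have h2 := pt_le H (shf i)
  constructor <;> nlinarith

lemma dg0 (lam : ℝ) : dg lam 0 = 0 := rfl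
lemma dg1 (lam : ℝ) : dg lam 1 = 2 * lam := rfl
lemma dg2 (lam : ℝ) : dg lam 2 = 3 * lam - lam ^ 2 := rfl
lemma dg3 (lam : ℝ) : dg lam 3 = 1 - lam := rfl

lemma fin4 (b : Fin 4) : b = 0 ∨ b = 1 ∨ b = 2 ∨ b = 3 := by
  fin_cases b <;> simp

/-- A large value forces the first digit to be the last one. -/
lemma dig_ge {lam : ℝ} (H : Hyp lam) (i : ℕ → Fin 4) (h : 4 * lam - lam ^ 2 < ptOf lam i) :
    i 0 = 3 := by
  have h0 := H.pos; have h1 := H.quarter; have h2 := H.gap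
  have hb := (pt_bd H i).2
  rcases fin4 (i 0) with e | e | e | e <;> rw [e] at hb ⊢ <;>
    simp only [dg0, dg1, dg2, dg3] at hb <;> exfalso <;> nlinarith

lemma dig_le {lam : ℝ} (H : Hyp lam) (i : ℕ → Fin 4) (h : ptOf lam i < 2 * lam) :
    i 0 = 0 := by
  have h0 := H.pos; have h1 := H.quarter; have h2 := H.gap
  have hb := (pt_bd H i).1
  rcases fin4 (i 0) with e | e | e | e <;> rw [e] at hb ⊢ <;>
    simp only [dg0, dg1, dg2, dg3] at hb <;> exfalso <;> nlinarith

/-- One step of uniqueness. -/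
lemma uniq_step {lam : ℝ} (H : Hyp lam) (i j : ℕ → Fin 4) (hi : okk (i 0) (i 1))
    (h : ptOf lam i = ptOf lam j) : i 0 = j 0 := by
  have h0 := H.pos; have h1 := H.quarter; have h2 := H.gap
  obtain ⟨hb1, hb2⟩ := pt_bd H i
  obtain ⟨hc1, hc2⟩ := pt_bd H j
  have hs := pt_step H i
  rw [← h] at hc1 hc2
  have hu : i 0 = 1 → j 0 = 2 → False := by
    intro e e'
    rw [e, dg1] at hs
    rw [e', dg2] at hc1
    have : 1 - lam ≤ ptOf lam (shf i) := by
      by_contra hcon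
      push Not at hcon
      nlinarith
    have := dig_ge H (shf i) (by linarith)
    exact hi.1 ⟨e, this⟩
  have hv : i 0 = 2 → j 0 = 1 → False := by
    intro e e'
    rw [e, dg2] at hs
    rw [e', dg1] at hc2
    have : ptOf lam (shf i) ≤ lam := by
      by_contra hcon
      push Not at hcon
      nlinarith
    have := dig_le H (shf i) (by linarith)
    exact hi.2 ⟨e, this⟩
  rcases fin4 (i 0) with e | e | e | e <;> rcases fin4 (j 0) with e' | e' | e' | e' <;>
    first
    | (rw [e, e']; done)
    | exact (hu e e').elim
    | exact (hv e e').elim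
    | (exfalso; rw [e] at hb1 hb2; rw [e'] at hc1 hc2
       simp only [dg0, dg1, dg2, dg3] at hb1 hb2 hc1 hc2; nlinarith)

lemma uniq {lam : ℝ} (H : Hyp lam) (n : ℕ) : ∀ (i j : ℕ → Fin 4), Adm i →
    ptOf lam i = ptOf lam j → i n = j n := by
  induction n with
  | zero => intro i j hi h; exact uniq_step H i j (hi 0) h
  | succ n ih =>
    intro i j hi h
    have e := uniq_step H i j (hi 0) h
    refine ih (shf i) (shf j) hi.shf ?_
    rw [pt_step H i, pt_step H j, e] at h
    have h0 := H.pos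
    have : lam * ptOf lam (shf i) = lam * ptOf lam (shf j) := by linarith
    exact mul_left_cancel₀ h0.ne' this

lemma cod_adm {lam : ℝ} (H : Hyp lam) {i : ℕ → Fin 4} (hi : Adm i) :
    cod lam (ptOf lam i) = {i} := by
  ext j
  simp only [cod, Set.mem_ofPred_eq, Set.mem_singleton_iff]
  constructor
  · intro h; funext n; exact (uniq H n i j hi h.symm).symm
  · rintro rfl; rfl

/-- Quantitative separation. -/
lemma sep {lam : ℝ} (H : Hyp lam) (i j : ℕ → Fin 4) (hi : okk (i 0) (i 1)) (hj : okk (j 0) (j 1))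
    (h : i 0 ≠ j 0) : lam * (1 - 5 * lam + lam ^ 2) ≤ |ptOf lam i - ptOf lam j| := by
  have h0 := H.pos; have h1 := H.quarter; have h2 := H.gap
  obtain ⟨hb1, hb2⟩ := pt_bd H i
  obtain ⟨hc1, hc2⟩ := pt_bd H j
  have key : ∀ i j : ℕ → Fin 4, okk (i 0) (i 1) → okk (j 0) (j 1) → i 0 = 1 → j 0 = 2 →
      lam * (1 - 5 * lam + lam ^ 2) ≤ ptOf lam j - ptOf lam i := by
    intro i j hi hj e e'
    have a1 : ptOf lam (shf i) ≤ 4 * lam - lam ^ 2 := by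
      by_contra hcon
      push Not at hcon
      exact hi.1 ⟨e, dig_ge H (shf i) hcon⟩
    have a2 : 2 * lam ≤ ptOf lam (shf j) := by
      by_contra hcon
      push Not at hcon
      exact hj.2 ⟨e', dig_le H (shf j) hcon⟩
    rw [pt_step H i, pt_step H j, e, e', dg1, dg2]
    nlinarith
  have hA : lam * (1 - 5 * lam + lam ^ 2) ≤ lam := by nlinarith
  have hB : lam * (1 - 5 * lam + lam ^ 2) ≤ 1 - 5 * lam + lam ^ 2 := by nlinarith
  rcases fin4 (i 0) with e | e | e | e <;> rcases fin4 (j 0) with e' | e' | e' | e' <;>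
    first
    | (exfalso; apply h; rw [e, e']; done)
    | exact (key i j hi hj e e').trans ((le_abs_self _).trans_eq (abs_sub_comm _ _))
    | exact (key j i hj hi e' e).trans (le_abs_self _)
    | (rw [e] at hb1 hb2; rw [e'] at hc1 hc2
       simp only [dg0, dg1, dg2, dg3] at hb1 hb2 hc1 hc2
       first
       | (refine le_trans ?_ (le_abs_self _); nlinarith)
       | (refine le_trans ?_ (neg_le_abs _); nlinarith))

/-! ### Counting codings -/

/-- Replace the word at positions `n, n+1` by its partner. -/
def swp (i : ℕ → Fin 4) (n : ℕ) : ℕ → Fin 4 :=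
  fun k => if k = n then (if i n = 1 then 2 else 1)
    else if k = n + 1 then (if i n = 1 then 0 else 3) else i k

lemma pt_swp {lam : ℝ} (H : Hyp lam) (n : ℕ) : ∀ (i : ℕ → Fin 4), ¬ okk (i n) (i (n + 1)) →
    ptOf lam (swp i n) = ptOf lam i := by
  induction n with
  | zero =>
    intro i hi
    rw [pt_step H, pt_step H (shf (swp i 0)), pt_step H i, pt_step H (shf i)]
    have e : shf (shf (swp i 0)) = shf (shf i) := by
      funext k; simp [shf, swp]
    rw [e]
    have hi' : (i 0 = 1 ∧ i 1 = 3) ∨ (i 0 = 2 ∧ i 1 = 0) := by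
      unfold okk at hi; rw [zero_add] at hi; tauto
    rcases hi' with ⟨e1, e2⟩ | ⟨e1, e2⟩
    · simp only [shf, swp, e1, e2, zero_add, if_true, if_false, one_ne_zero, dg0, dg1, dg2, dg3]
      ring
    · have : ¬ ((2 : Fin 4) = 1) := by decide
      simp only [shf, swp, e1, e2, zero_add, if_true, if_false, one_ne_zero, dg0, dg1, dg2, dg3, this]
      ring
  | succ n ih =>
    intro i hi
    rw [pt_step H, pt_step H i]
    have e : shf (swp i (n + 1)) = swp (shf i) n := by
      funext k
      by_cases h1 : k = n
      · simp only [shf, swp, h1, if_true]; rfl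
      · by_cases h2 : k = n + 1
        · simp [shf, swp, h2]; rfl
        · simp [shf, swp, h1, h2]
    rw [e, ih (shf i) hi]
    simp [swp]

lemma swp_ne (i : ℕ → Fin 4) (n : ℕ) (hi : ¬ okk (i n) (i (n + 1))) : swp i n n ≠ i n := by
  have hi' : (i n = 1 ∧ i (n+1) = 3) ∨ (i n = 2 ∧ i (n+1) = 0) := by
    unfold okk at hi; tauto
  rcases hi' with ⟨e1, e2⟩ | ⟨e1, e2⟩ <;> simp [swp, e1]

lemma swp_lt (i : ℕ → Fin 4) {n m : ℕ} (h : n < m) : swp i m n = i n := by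
  have h1 : n ≠ m := by omega
  have h2 : n ≠ m + 1 := by omega
  simp [swp, h1, h2]

lemma adm_of_unique {lam : ℝ} (H : Hyp lam) {i : ℕ → Fin 4} {x : ℝ} (h : cod lam x = {i}) :
    Adm i := by
  intro n
  by_contra hn
  have hi : i ∈ cod lam x := by rw [h]; rfl
  have : swp i n ∈ cod lam x := by
    have hi' : ptOf lam i = x := hi
    change ptOf lam _ = x
    rw [pt_swp H n i hn, hi']
  rw [h, Set.mem_singleton_iff] at this
  exact swp_ne i n hn (by rw [this])

/-- A point with finitely many codings has eventually admissible codings. -/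
lemma ev_adm {lam : ℝ} (H : Hyp lam) {i : ℕ → Fin 4} (hfin : (cod lam (ptOf lam i)).Finite) :
    ∃ n, Adm (shf^[n] i) := by
  have hF : {n | ¬ okk (i n) (i (n + 1))}.Finite := by
    refine Set.Finite.of_finite_image (f := swp i) (hfin.subset ?_) ?_
    · rintro _ ⟨n, hn, rfl⟩
      exact pt_swp H n i hn
    · intro n hn m hm h
      rcases lt_trichotomy n m with hlt | heq | hlt
      · exact (swp_ne i n hn (by rw [h, swp_lt i hlt])).elim
      · exact heq
      · exact (swp_ne i m hm (by rw [← h, swp_lt i hlt])).elim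
  obtain ⟨N, hN⟩ := hF.bddAbove
  have hsh : ∀ n k, shf^[n] i k = i (n + k) := by
    intro n
    induction n with
    | zero => intro k; simp
    | succ n ih => intro k; rw [Function.iterate_succ_apply']; simp only [shf]; rw [ih]; congr 1; omega
  refine ⟨N + 1, fun k => ?_⟩
  rw [hsh, hsh]
  by_contra hc
  have := hN (show (N + 1 + k) ∈ {n | ¬ okk (i n) (i (n + 1))} from hc)
  omega

/-- The set of points with exactly one coding. -/
lemma one_iff {lam : ℝ} (H : Hyp lam) (x : ℝ) :
    (cod lam x).encard = 1 ↔ ∃ i, Adm i ∧ ptOf lam i = x := by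
  rw [Set.encard_eq_one]
  constructor
  · rintro ⟨i, hi⟩
    refine ⟨i, adm_of_unique H hi, ?_⟩
    have : i ∈ cod lam x := by rw [hi]; rfl
    exact this
  · rintro ⟨i, hi, rfl⟩
    exact ⟨i, cod_adm H hi⟩

/-- Doubling the number of codings. -/
lemma cod_double {lam : ℝ} (H : Hyp lam) {x : ℝ} (hx : 0 ≤ x ∧ x ≤ 1) :
    (cod lam (lam ^ 2 * x + 3 * lam - lam ^ 2)).encard = 2 * (cod lam x).encard := by
  have h0 := H.pos; have h1 := H.quarter; have h2 := H.gap
  obtain ⟨hx0, hx1⟩ := hx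
  have hxx : 0 ≤ lam ^ 2 * x := by positivity
  have hxy : lam ^ 2 * x ≤ lam ^ 2 := by nlinarith [sq_nonneg lam]
  have e : cod lam (lam ^ 2 * x + 3 * lam - lam ^ 2) =
      (fun i => cns 1 (cns 3 i)) '' cod lam x ∪ (fun i => cns 2 (cns 0 i)) '' cod lam x := by
    ext i
    constructor
    · intro hi
      have hi : ptOf lam i = lam ^ 2 * x + 3 * lam - lam ^ 2 := hi
      have hs := pt_step H i
      have hs' := pt_step H (shf i)
      obtain ⟨hb1, hb2⟩ := pt_bd H i
      rw [hi] at hb1 hb2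
      rcases fin4 (i 0) with e | e | e | e
      · exfalso; rw [e, dg0] at hb2; nlinarith
      · left
        rw [e, dg1, hi] at hs
        have h3 : ptOf lam (shf i) = lam * x + 1 - lam := by
          apply mul_left_cancel₀ h0.ne'; linarith
        have h4 : shf i 0 = 3 := dig_ge H _ (by rw [h3]; nlinarith)
        rw [h3, h4, dg3] at hs'
        refine ⟨shf (shf i), ?_, ?_⟩
        · change ptOf lam _ = x
          apply mul_left_cancel₀ h0.ne'; linarith
        · simp only
          rw [← h4, cns_shf, ← e, cns_shf]
      · right
        rw [e, dg2, hi] at hs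
        have h3 : ptOf lam (shf i) = lam * x := by
          apply mul_left_cancel₀ h0.ne'; linarith
        have h4 : shf i 0 = 0 := dig_le H _ (by rw [h3]; nlinarith)
        rw [h3, h4, dg0] at hs'
        refine ⟨shf (shf i), ?_, ?_⟩
        · change ptOf lam _ = x
          apply mul_left_cancel₀ h0.ne'; linarith
        · simp only
          rw [← h4, cns_shf, ← e, cns_shf]
      · exfalso; rw [e, dg3] at hb1; nlinarith
    · rintro (⟨j, hj, rfl⟩ | ⟨j, hj, rfl⟩)
      · have hj : ptOf lam j = x := hj
        change ptOf lam _ = _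
        simp only
        rw [pt_cns H, pt_cns H, hj, dg1, dg3]; ring
      · have hj : ptOf lam j = x := hj
        change ptOf lam _ = _
        simp only
        rw [pt_cns H, pt_cns H, hj, dg2, dg0]; ring
  rw [e, Set.encard_union_eq, Function.Injective.encard_image, Function.Injective.encard_image,
    two_mul]
  · exact (cns_inj 2).comp (cns_inj 0)
  · exact (cns_inj 1).comp (cns_inj 3)
  · rw [Set.disjoint_left]
    rintro _ ⟨j, _, rfl⟩ ⟨j', _, h⟩
    have := congrFun h 0
    simp [cns] at this

/-! ### Weights -/

/-- The Perron eigenvector. -/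
noncomputable def wt : Fin 4 → ℝ := ![Real.sqrt 2, 1, 1, Real.sqrt 2]

/-- The Perron eigenvalue. -/
noncomputable def tt : ℝ := 2 + Real.sqrt 2

/-- Partial sums of weights. -/
noncomputable def pS : Fin 4 → Fin 4 → ℝ :=
  ![![0, Real.sqrt 2, Real.sqrt 2 + 1, Real.sqrt 2 + 2], ![0, Real.sqrt 2, Real.sqrt 2 + 1, 0],
    ![0, 0, 1, 2], ![0, Real.sqrt 2, Real.sqrt 2 + 1, Real.sqrt 2 + 2]]

lemma sqrt2_facts : Real.sqrt 2 * Real.sqrt 2 = 2 ∧ 1 < Real.sqrt 2 ∧ Real.sqrt 2 < 2 := by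
  have h := Real.mul_self_sqrt (show (0:ℝ) ≤ 2 by norm_num)
  have h0 := Real.sqrt_nonneg 2
  refine ⟨h, by nlinarith, by nlinarith⟩

lemma tt_gt : 1 < tt := by
  have := sqrt2_facts.2.1
  unfold tt; linarith

lemma wt_one_le (a : Fin 4) : 1 ≤ wt a := by
  have := sqrt2_facts.2.1.le
  fin_cases a <;> simp [wt] <;> linarith

lemma wt_le_two (a : Fin 4) : wt a ≤ 2 := by
  have := sqrt2_facts.2.2.le
  fin_cases a <;> simp [wt] <;> linarith

lemma nxt_exists (a : Fin 4) (v : ℝ) (h0 : 0 ≤ v) (h1 : v < tt * wt a) :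
    ∃ b, okk a b ∧ pS a b ≤ v ∧ v < pS a b + wt b := by
  obtain ⟨hq, hq1, hq2⟩ := sqrt2_facts
  unfold tt at h1
  rcases fin4 a with e | e | e | e <;> subst e
  · simp only [wt, Matrix.cons_val] at h1
    by_cases c1 : v < Real.sqrt 2
    · exact ⟨0, by decide, by simp [pS, wt]; constructor <;> linarith⟩
    by_cases c2 : v < Real.sqrt 2 + 1
    · exact ⟨1, by decide, by simp [pS, wt]; constructor <;> linarith⟩
    by_cases c3 : v < Real.sqrt 2 + 2
    · exact ⟨2, by decide, by simp [pS, wt]; constructor <;> linarith⟩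
    · exact ⟨3, by decide, by simp [pS, wt]; constructor <;> linarith⟩
  · simp only [wt, Matrix.cons_val] at h1
    by_cases c1 : v < Real.sqrt 2
    · exact ⟨0, by decide, by simp [pS, wt]; constructor <;> linarith⟩
    by_cases c2 : v < Real.sqrt 2 + 1
    · exact ⟨1, by decide, by simp [pS, wt]; constructor <;> linarith⟩
    · exact ⟨2, by decide, by simp [pS, wt]; constructor <;> linarith⟩
  · simp only [wt, Matrix.cons_val] at h1
    by_cases c1 : v < 1
    · exact ⟨1, by decide, by simp [pS, wt]; constructor <;> linarith⟩
    by_cases c2 : v < 2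
    · exact ⟨2, by decide, by simp [pS, wt]; constructor <;> linarith⟩
    · exact ⟨3, by decide, by simp [pS, wt]; constructor <;> linarith⟩
  · simp only [wt, Matrix.cons_val] at h1
    by_cases c1 : v < Real.sqrt 2
    · exact ⟨0, by decide, by simp [pS, wt]; constructor <;> linarith⟩
    by_cases c2 : v < Real.sqrt 2 + 1
    · exact ⟨1, by decide, by simp [pS, wt]; constructor <;> linarith⟩
    by_cases c3 : v < Real.sqrt 2 + 2
    · exact ⟨2, by decide, by simp [pS, wt]; constructor <;> linarith⟩
    · exact ⟨3, by decide, by simp [pS, wt]; constructor <;> linarith⟩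

open Classical in
/-- The digit chosen at a state. -/
noncomputable def nxt (p : Fin 4 × ℝ) : Fin 4 :=
  if h : ∃ b, okk p.1 b ∧ pS p.1 b ≤ p.2 ∧ p.2 < pS p.1 b + wt b then h.choose else 0

/-- Transition of states. -/
noncomputable def stp (p : Fin 4 × ℝ) : Fin 4 × ℝ := (nxt p, tt * (p.2 - pS p.1 (nxt p)))

/-- The digit sequence of a state. -/
noncomputable def orb (p : Fin 4 × ℝ) : ℕ → Fin 4 := fun n => nxt (stp^[n] p)

/-- Valid states. -/
def Val (p : Fin 4 × ℝ) : Prop := 0 ≤ p.2 ∧ p.2 < tt * wt p.1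

lemma nxt_spec {p : Fin 4 × ℝ} (hp : Val p) :
    okk p.1 (nxt p) ∧ pS p.1 (nxt p) ≤ p.2 ∧ p.2 < pS p.1 (nxt p) + wt (nxt p) := by
  have h := nxt_exists p.1 p.2 hp.1 hp.2
  unfold nxt
  rw [dif_pos h]
  exact h.choose_spec

lemma Val.stp {p : Fin 4 × ℝ} (hp : Val p) : Val (stp p) := by
  obtain ⟨_, h1, h2⟩ := nxt_spec hp
  have ht := tt_gt
  constructor
  · exact mul_nonneg (by linarith) (by linarith)
  · have h3 : p.2 - pS p.1 (nxt p) < wt (nxt p) := by linarith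
    exact mul_lt_mul_of_pos_left h3 (by linarith)

lemma shf_orb (p : Fin 4 × ℝ) : shf (orb p) = orb (stp p) := rfl

lemma orb_zero (p : Fin 4 × ℝ) : orb p 0 = nxt p := rfl

lemma orb_adm (n : ℕ) : ∀ {p : Fin 4 × ℝ}, Val p → okk (orb p n) (orb p (n + 1)) := by
  induction n with
  | zero => intro p hp; exact (nxt_spec hp.stp).1
  | succ n ih => intro p hp; exact ih hp.stp

/-- The key Hölder estimate, up to an exponentially small error. -/
lemma holder_aux {lam : ℝ} (H : Hyp lam) {s C : ℝ} (hs : lam ^ s = tt⁻¹)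
    (hs0 : 0 < s) (hC : 2 * tt ≤ C) (hC' : 2 * tt ≤ C * (lam * (1 - 5 * lam + lam ^ 2)) ^ s) (n : ℕ) :
    ∀ (p q : Fin 4 × ℝ), Val p → Val q → p.1 = q.1 →
      |p.2 - q.2| ≤ C * |ptOf lam (orb p) - ptOf lam (orb q)| ^ s + C * tt⁻¹ ^ n := by
  have ht := tt_gt
  have h0 := H.pos
  have hC0 : 0 < C := by linarith
  have triv : ∀ (p q : Fin 4 × ℝ), Val p → Val q → |p.2 - q.2| ≤ 2 * tt := by
    intro p q hp hq
    obtain ⟨a, b⟩ := hp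
    obtain ⟨c, d⟩ := hq
    have e1 := wt_le_two p.1
    have e2 := wt_le_two q.1
    rw [abs_le]; constructor <;> nlinarith
  induction n with
  | zero =>
    intro p q hp hq _
    have := triv p q hp hq
    have h3 : 0 ≤ C * |ptOf lam (orb p) - ptOf lam (orb q)| ^ s := by positivity
    simp only [pow_zero, mul_one]
    linarith
  | succ n ih =>
    intro p q hp hq hpq
    by_cases hd : nxt p = nxt q
    · have h1 := ih (stp p) (stp q) hp.stp hq.stp hd
      have h2 : |ptOf lam (orb p) - ptOf lam (orb q)| =
          lam * |ptOf lam (orb (stp p)) - ptOf lam (orb (stp q))| := by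
        rw [pt_step H (orb p), pt_step H (orb q), orb_zero, orb_zero, hd, shf_orb, shf_orb]
        rw [← abs_of_pos h0, ← abs_mul, abs_of_pos h0]
        congr 1; ring
      have h3 : |p.2 - q.2| = tt⁻¹ * |(stp p).2 - (stp q).2| := by
        have : (stp p).2 - (stp q).2 = tt * (p.2 - q.2) := by
          simp only [stp]; rw [hd, hpq]; ring
        rw [this, abs_mul, abs_of_pos (by linarith : 0 < tt), inv_mul_cancel_left₀ (by linarith)]
      rw [h2, h3, Real.mul_rpow h0.le (abs_nonneg _), hs]
      calc _ ≤ tt⁻¹ * _ := mul_le_mul_of_nonneg_left h1 (by positivity)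
        _ = _ := by ring
    · have h1 := sep H (orb p) (orb q) (orb_adm 0 hp) (orb_adm 0 hq) hd
      have h2 : (lam * (1 - 5 * lam + lam ^ 2)) ^ s ≤ |ptOf lam (orb p) - ptOf lam (orb q)| ^ s :=
        Real.rpow_le_rpow (mul_nonneg h0.le H.gap.le) h1 hs0.le
      have h3 := mul_le_mul_of_nonneg_left h2 hC0.le
      have h4 : 0 ≤ C * tt⁻¹ ^ (n + 1) := by positivity
      have := triv p q hp hq
      linarith

lemma holder_main {lam : ℝ} (H : Hyp lam) {s : ℝ} (hs : lam ^ s = tt⁻¹) (hs0 : 0 < s) :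
    ∃ C : ℝ, 0 ≤ C ∧ ∀ (p q : Fin 4 × ℝ), Val p → Val q → p.1 = q.1 →
      |p.2 - q.2| ≤ C * |ptOf lam (orb p) - ptOf lam (orb q)| ^ s := by
  have ht := tt_gt
  have hc : 0 < (lam * (1 - 5 * lam + lam ^ 2)) ^ s :=
    Real.rpow_pos_of_pos (mul_pos H.pos H.gap) _
  set c := (lam * (1 - 5 * lam + lam ^ 2)) ^ s with hcdef
  refine ⟨max (2 * tt) (2 * tt / c), le_max_of_le_left (by linarith), ?_⟩
  intro p q hp hq hpq
  have hlim : Tendsto (fun n : ℕ => max (2 * tt) (2 * tt / c) *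
      |ptOf lam (orb p) - ptOf lam (orb q)| ^ s + max (2 * tt) (2 * tt / c) * tt⁻¹ ^ n) atTop
      (𝓝 (max (2 * tt) (2 * tt / c) *
      |ptOf lam (orb p) - ptOf lam (orb q)| ^ s + max (2 * tt) (2 * tt / c) * 0)) := by
    refine tendsto_const_nhds.add (tendsto_const_nhds.mul ?_)
    exact tendsto_pow_atTop_nhds_zero_of_lt_one (by positivity) (inv_lt_one_of_one_lt₀ ht)
  rw [mul_zero, add_zero] at hlim
  refine ge_of_tendsto' hlim fun n => ?_
  refine holder_aux H hs hs0 (le_max_left _ _) ?_ n p q hp hq hpq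
  have : 2 * tt / c ≤ max (2 * tt) (2 * tt / c) := le_max_right _ _
  rwa [div_le_iff₀ hc] at this

/-- The univoque set. -/
def XX (lam : ℝ) : Set ℝ := {x | ∃ i, Adm i ∧ ptOf lam i = x}

lemma dim_lower {lam : ℝ} (H : Hyp lam) {s : ℝ} (hs : lam ^ s = tt⁻¹) (hs0 : 0 < s) :
    ENNReal.ofReal s ≤ dimH (XX lam) := by
  have ht := tt_gt
  obtain ⟨C, hC0, hC⟩ := holder_main H hs hs0
  let E : Set ℝ := Set.Ico 0 1
  let h : ℝ → ℝ := fun v => ptOf lam (orb (0, v))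
  have hval : ∀ v ∈ E, Val ((0 : Fin 4), v) := by
    rintro v ⟨hv0, hv1⟩
    refine ⟨hv0, ?_⟩
    have := wt_one_le 0
    simp only
    nlinarith
  have hest : ∀ v ∈ E, ∀ u ∈ E, |v - u| ≤ C * |h v - h u| ^ s := fun v hv u hu =>
    hC (0, v) (0, u) (hval v hv) (hval u hu) rfl
  have hinj : Set.InjOn h E := by
    intro v hv u hu e
    have := hest v hv u hu
    rw [e, sub_self, abs_zero, Real.zero_rpow hs0.ne', mul_zero] at this
    exact sub_eq_zero.1 (abs_eq_zero.1 (le_antisymm this (abs_nonneg _)))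
  let g := Function.invFunOn h E
  have hg : ∀ v ∈ E, g (h v) = v := fun v hv => hinj.leftInvOn_invFunOn hv
  have hH : HolderOnWith C.toNNReal s.toNNReal g (h '' E) := by
    rintro _ ⟨v, hv, rfl⟩ _ ⟨u, hu, rfl⟩
    rw [hg v hv, hg u hu, edist_dist, edist_dist, Real.dist_eq, Real.dist_eq,
      Real.coe_toNNReal s hs0.le, ENNReal.ofReal_rpow_of_nonneg (abs_nonneg _) hs0.le]
    change _ ≤ ENNReal.ofReal C * _
    rw [← ENNReal.ofReal_mul hC0]
    exact ENNReal.ofReal_le_ofReal (hest v hv u hu)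
  have hs1 : 0 < s.toNNReal := by simpa using hs0
  have h1 := hH.dimH_image_le hs1
  have h2 : g '' (h '' E) = E := by
    rw [Set.image_image]
    ext v
    constructor
    · rintro ⟨u, hu, rfl⟩; simp only; rw [hg u hu]; exact hu
    · intro hv; exact ⟨v, hv, hg v hv⟩
  have h3 : dimH E = 1 := by
    have h7 : (interior E).Nonempty := by simp [E]
    simpa using Real.dimH_of_nonempty_interior h7
  rw [h2, h3] at h1
  have h4 : h '' E ⊆ XX lam := by
    rintro _ ⟨v, hv, rfl⟩
    exact ⟨_, fun n => orb_adm n (hval v hv), rfl⟩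
  refine le_trans ?_ (dimH_mono h4)
  change (s.toNNReal : ENNReal) ≤ _
  have h5 : (s.toNNReal : ENNReal) ≠ 0 := by simpa using hs0
  have h6 := (ENNReal.le_div_iff_mul_le (Or.inl h5) (Or.inl ENNReal.coe_ne_top)).1 h1
  simpa using h6

/-- Finite covers of the points whose coding may follow the letter `a`. -/
lemma cover {lam : ℝ} (H : Hyp lam) (n : ℕ) : ∀ a : Fin 4, ∃ (ι : Type) (_ : Fintype ι)
    (S : ι → Set ℝ), (∀ i, Adm i → okk a (i 0) → ptOf lam i ∈ ⋃ k, S k) ∧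
      (∀ k, ∀ x ∈ S k, ∀ y ∈ S k, |x - y| ≤ lam ^ n) ∧ (Fintype.card ι : ℝ) ≤ tt ^ n * wt a := by
  have h0 := H.pos
  induction n with
  | zero =>
    intro a
    refine ⟨Unit, inferInstance, fun _ => Set.Icc 0 1, ?_, ?_, ?_⟩
    · intro i _ _
      exact Set.mem_iUnion.2 ⟨(), pt_nonneg H i, pt_le H i⟩
    · rintro _ x ⟨hx0, hx1⟩ y ⟨hy0, hy1⟩
      rw [abs_le, pow_zero]; constructor <;> linarith
    · simpa using wt_one_le a
  | succ n ih =>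
    intro a
    choose ι hF S hcov hdiam hcard using ih
    refine ⟨Σ b : {b : Fin 4 // okk a b}, ι b.1, inferInstance,
      fun p => (fun x => dg lam p.1.1 + lam * x) '' S p.1.1 p.2, ?_, ?_, ?_⟩
    · intro i hi ha
      obtain ⟨k, hk⟩ := Set.mem_iUnion.1 (hcov (i 0) (shf i) hi.shf (hi 0))
      refine Set.mem_iUnion.2 ⟨⟨⟨i 0, ha⟩, k⟩, ptOf lam (shf i), hk, ?_⟩
      exact (pt_step H i).symm
    · rintro ⟨b, k⟩ _ ⟨x, hx, rfl⟩ _ ⟨y, hy, rfl⟩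
      have e : dg lam b.1 + lam * x - (dg lam b.1 + lam * y) = lam * (x - y) := by ring
      simp only
      rw [e, abs_mul, abs_of_pos h0, pow_succ']
      exact mul_le_mul_of_nonneg_left (hdiam _ _ x hx y hy) h0.le
    · rw [Fintype.card_sigma, Nat.cast_sum]
      have h1 : ∑ b : {b : Fin 4 // okk a b}, ((Fintype.card (ι b.1) : ℕ) : ℝ)
          ≤ ∑ b : {b : Fin 4 // okk a b}, tt ^ n * wt b.1 :=
        Finset.sum_le_sum fun b _ => hcard b.1
      refine h1.trans (le_of_eq ?_)
      rw [← Finset.mul_sum, pow_succ, mul_assoc]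
      congr 1
      have h2 : ∑ b : {b : Fin 4 // okk a b}, wt b.1 = ∑ b : Fin 4, if okk a b then wt b else 0 := by
        rw [← Finset.sum_filter]
        exact (Finset.sum_subtype _ (by simp) _).symm
      rw [h2, Fin.sum_univ_four]
      obtain ⟨hq, _, _⟩ := sqrt2_facts
      rcases fin4 a with e | e | e | e <;> subst e <;> simp [okk, wt, tt] <;> linarith

lemma dim_upper {lam : ℝ} (H : Hyp lam) {s : ℝ} (hs : lam ^ s = tt⁻¹) (hs0 : 0 < s) :
    dimH (XX lam) ≤ ENNReal.ofReal s := by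
  have h0 := H.pos
  have ht := tt_gt
  have h1 := H.quarter
  change _ ≤ (s.toNNReal : ENNReal)
  apply dimH_le_of_hausdorffMeasure_ne_top
  rw [Real.coe_toNNReal s hs0.le]
  choose ι hF S hcov hdiam hcard using fun n => cover H n 0
  have hr : Tendsto (fun n : ℕ => ENNReal.ofReal (lam ^ n)) atTop (𝓝 0) := by
    rw [← ENNReal.ofReal_zero]
    exact ENNReal.tendsto_ofReal (tendsto_pow_atTop_nhds_zero_of_lt_one h0.le (by linarith))
  have hd : ∀ n k, Metric.ediam (S n k) ≤ ENNReal.ofReal (lam ^ n) := by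
    intro n k
    apply Metric.ediam_le
    intro x hx y hy
    rw [edist_dist, Real.dist_eq]
    exact ENNReal.ofReal_le_ofReal (hdiam n k x hx y hy)
  have key := MeasureTheory.Measure.hausdorffMeasure_le_liminf_sum s (XX lam) _ hr S
    (Eventually.of_forall hd) (Eventually.of_forall fun n => by
      rintro _ ⟨i, hi, rfl⟩
      exact hcov n i hi (by simp [okk]))
  have hb : ∀ n, ∑ k, Metric.ediam (S n k) ^ s ≤ ENNReal.ofReal 2 := by
    intro n
    calc ∑ k, Metric.ediam (S n k) ^ s ≤ ∑ k : ι n, ENNReal.ofReal (tt⁻¹ ^ n) := by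
          apply Finset.sum_le_sum
          intro k _
          refine (ENNReal.rpow_le_rpow (hd n k) hs0.le).trans (le_of_eq ?_)
          rw [ENNReal.ofReal_rpow_of_nonneg (by positivity) hs0.le, ← hs,
            ← Real.rpow_natCast, ← Real.rpow_natCast, ← Real.rpow_mul h0.le, ← Real.rpow_mul h0.le,
            mul_comm]
      _ = ENNReal.ofReal ((Fintype.card (ι n) : ℝ) * tt⁻¹ ^ n) := by
          rw [Finset.sum_const, nsmul_eq_mul, ENNReal.ofReal_mul (by positivity)]
          simp
      _ ≤ ENNReal.ofReal 2 := by
          apply ENNReal.ofReal_le_ofReal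
          have h2 := mul_le_mul_of_nonneg_right (hcard n) (by positivity : 0 ≤ tt⁻¹ ^ n)
          have h3 : tt ^ n * wt 0 * tt⁻¹ ^ n = wt 0 := by
            rw [inv_pow]; field_simp
          rw [h3] at h2
          exact h2.trans (wt_le_two 0)
  refine ne_top_of_le_ne_top (ENNReal.ofReal_ne_top (r := 2)) (key.trans ?_)
  refine (liminf_le_liminf (Eventually.of_forall hb)).trans ?_
  rw [liminf_const]

/-! ### Points with several codings -/

/-- The affine map attached to a finite word. -/
noncomputable def wmap (lam : ℝ) : List (Fin 4) → ℝ → ℝ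
  | [], x => x
  | b :: l, x => dg lam b + lam * wmap lam l x

lemma wmap_lip {lam : ℝ} (H : Hyp lam) (l : List (Fin 4)) : LipschitzWith 1 (wmap lam l) := by
  have h0 := H.pos; have h1 := H.quarter
  induction l with
  | nil => exact LipschitzWith.id
  | cons b l ih =>
    apply LipschitzWith.of_dist_le_mul
    intro x y
    have := ih.dist_le_mul x y
    simp only [NNReal.coe_one, one_mul, Real.dist_eq] at this ⊢
    have e : wmap lam (b :: l) x - wmap lam (b :: l) y = lam * (wmap lam l x - wmap lam l y) := by
      simp only [wmap]; ring
    rw [e, abs_mul, abs_of_pos h0]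
    have := abs_nonneg (wmap lam l x - wmap lam l y)
    nlinarith

lemma pt_wmap {lam : ℝ} (H : Hyp lam) (n : ℕ) : ∀ i, ∃ l, ptOf lam i = wmap lam l (ptOf lam (shf^[n] i)) := by
  induction n with
  | zero => intro i; exact ⟨[], rfl⟩
  | succ n ih =>
    intro i
    obtain ⟨l, hl⟩ := ih (shf i)
    refine ⟨i 0 :: l, ?_⟩
    rw [pt_step H, hl]; rfl

lemma dim_fin_le {lam : ℝ} (H : Hyp lam) (A : Set ℝ)
    (hA : ∀ x ∈ A, (cod lam x).Finite ∧ (cod lam x).Nonempty) : dimH A ≤ dimH (XX lam) := by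
  have hsub : A ⊆ ⋃ l : List (Fin 4), wmap lam l '' XX lam := by
    intro x hx
    obtain ⟨hfin, i, hi⟩ := hA x hx
    have hi : ptOf lam i = x := hi
    subst hi
    obtain ⟨n, hn⟩ := ev_adm H hfin
    obtain ⟨l, hl⟩ := pt_wmap H n i
    exact Set.mem_iUnion.2 ⟨l, _, ⟨_, hn, rfl⟩, hl.symm⟩
  refine (dimH_mono hsub).trans ?_
  rw [dimH_iUnion]
  exact iSup_le fun l => (wmap_lip H l).dimH_image_le _

/-- Points with exactly `m` codings. -/
def NN (lam : ℝ) (m : ℕ) : Set ℝ := {x | (cod lam x).encard = (m : ℕ∞)}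

lemma NN_one {lam : ℝ} (H : Hyp lam) : NN lam 1 = XX lam := by
  ext x
  have := one_iff H x
  simpa [NN, XX] using this

lemma dim_le_double {lam : ℝ} (H : Hyp lam) (m : ℕ) (hm : 0 < m) :
    dimH (NN lam m) ≤ dimH (NN lam (2 * m)) := by
  have h0 := H.pos
  let φ : ℝ → ℝ := fun x => lam ^ 2 * x + 3 * lam - lam ^ 2
  have hφ : AntilipschitzWith (Real.toNNReal (lam ^ 2)⁻¹) φ := by
    apply AntilipschitzWith.of_le_mul_dist
    intro x y
    rw [Real.coe_toNNReal _ (by positivity), Real.dist_eq, Real.dist_eq]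
    have e : φ x - φ y = lam ^ 2 * (x - y) := by simp only [φ]; ring
    rw [e, abs_mul, abs_of_pos (by positivity : 0 < lam ^ 2), inv_mul_cancel_left₀ (by positivity)]
  refine (hφ.le_dimH_image (NN lam m)).trans (dimH_mono ?_)
  rintro _ ⟨x, hx, rfl⟩
  have hx : (cod lam x).encard = (m : ℕ∞) := hx
  have hne : (cod lam x).Nonempty := by
    rw [← Set.encard_pos, hx]; exact_mod_cast hm
  obtain ⟨i, hi⟩ := hne
  have hi : ptOf lam i = x := hi
  have hx01 : 0 ≤ x ∧ x ≤ 1 := by rw [← hi]; exact ⟨pt_nonneg H i, pt_le H i⟩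
  change (cod lam _).encard = _
  rw [cod_double H hx01, hx]
  push_cast; rfl

lemma dim_NN_pow {lam : ℝ} (H : Hyp lam) (k : ℕ) : dimH (NN lam (2 ^ k)) = dimH (XX lam) := by
  apply le_antisymm
  · apply dim_fin_le H
    intro x hx
    have hx : (cod lam x).encard = ((2 ^ k : ℕ) : ℕ∞) := hx
    constructor
    · apply Set.finite_of_encard_eq_coe hx
    · rw [← Set.encard_pos, hx]
      exact_mod_cast Nat.two_pow_pos k
  · induction k with
    | zero => rw [pow_zero, NN_one H]
    | succ k ih =>
      rw [pow_succ']
      exact ih.trans (dim_le_double H _ (Nat.two_pow_pos k))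

/-- for every `k ≥ 0`, `dim_H (U_{2^k}) = dim_H (U_1)
= log (2 + √2) / (- log λ)`. -/
theorem statement2
    (lam : ℝ) (hlam : 0 < lam ∧ lam < (5 - Real.sqrt 21) / 2)
    (f : Fin 4 → ℝ → ℝ)
    (hf : f = ![fun x => lam * x, fun x => lam * x + 2 * lam,
      fun x => lam * x + 3 * lam - lam ^ 2, fun x => lam * x + 1 - lam])
    (K : Set ℝ) (hKne : K.Nonempty) (hKcpt : IsCompact K)
    (hK : K = f 0 '' K ∪ f 1 '' K ∪ f 2 '' K ∪ f 3 '' K)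
    (U : ℕ → Set ℝ)
    (hU : ∀ k : ℕ, U k = {x ∈ K | (codings f x).encard = (k : ℕ∞)})
    (k : ℕ) :
    dimH (U (2 ^ k)) = dimH (U 1) ∧
      dimH (U 1) = ENNReal.ofReal (Real.log (2 + Real.sqrt 2) / (-Real.log lam)) := by
  have H := hyp_of hlam
  have hf' : ∀ b x, f b x = lam * x + dg lam b := by
    intro b x
    rw [hf]
    rcases fin4 b with e | e | e | e <;> subst e <;> simp [dg] <;> ring
  have hKs : ∀ b, ∀ x ∈ K, f b x ∈ K := by
    intro b x hx
    rw [hK]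
    rcases fin4 b with e | e | e | e <;> subst e
    · exact Or.inl (Or.inl (Or.inl ⟨x, hx, rfl⟩))
    · exact Or.inl (Or.inl (Or.inr ⟨x, hx, rfl⟩))
    · exact Or.inl (Or.inr ⟨x, hx, rfl⟩)
    · exact Or.inr ⟨x, hx, rfl⟩
  have hUN : ∀ m : ℕ, 0 < m → U m = NN lam m := by
    intro m hm
    rw [hU]
    ext x
    constructor
    · rintro ⟨_, hx⟩
      rw [codings_eq H f hf'] at hx
      exact hx
    · intro hx
      have hx : (cod lam x).encard = (m : ℕ∞) := hx
      have hne : (cod lam x).Nonempty := by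
        rw [← Set.encard_pos, hx]; exact_mod_cast hm
      obtain ⟨i, hi⟩ := hne
      have hi : ptOf lam i = x := hi
      refine ⟨?_, ?_⟩
      · rw [← hi]; exact pt_mem H f hf' K hKne hKcpt.isClosed hKs i
      · rw [codings_eq H f hf']; exact hx
  rw [hUN _ (Nat.two_pow_pos k), hUN 1 one_pos, dim_NN_pow H, NN_one H]
  refine ⟨rfl, ?_⟩
  have h0 := H.pos
  have hl : Real.log lam < 0 := Real.log_neg h0 (by have := H.quarter; linarith)
  have ht : 0 < Real.log tt := Real.log_pos tt_gt
  have hs0 : 0 < Real.log tt / (-Real.log lam) := div_pos ht (by linarith)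
  have hs : lam ^ (Real.log tt / (-Real.log lam)) = tt⁻¹ := by
    rw [Real.rpow_def_of_pos h0]
    have e : Real.log lam * (Real.log tt / (-Real.log lam)) = - Real.log tt := by
      have : Real.log lam ≠ 0 := hl.ne
      field_simp
    rw [e, Real.exp_neg, Real.exp_log (by linarith [tt_gt])]
  exact le_antisymm (dim_upper H hs hs0) (dim_lower H hs hs0)
end

section
/- Every x ∈ K either has exactly 2^k codings for some integer k ≥ 0, or its set of codings is uncountable. -/
open Filter Topology

namespace Coding4

set_option linter.unusedVariables false

/-- translation parts of the maps -/
noncomputable def dg (l : ℝ) : Fin 4 → ℝ := ![0, 2 * l, 3 * l - l ^ 2, 1 - l]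

/-- shift -/
def sh (i : ℕ → Fin 4) : ℕ → Fin 4 := fun k => i (k + 1)

/-- prepend a digit -/
def cons (a : Fin 4) (i : ℕ → Fin 4) : ℕ → Fin 4
  | 0 => a
  | n + 1 => i n

/-- the coding map -/
noncomputable def pr (l : ℝ) (i : ℕ → Fin 4) : ℝ := ∑' n, l ^ n * dg l (i n)

/-- the class of codings equivalent to `i` -/
def cls (l : ℝ) (i : ℕ → Fin 4) : Set (ℕ → Fin 4) := {j | pr l j = pr l i}

lemma sh_cons (a : Fin 4) (i : ℕ → Fin 4) : sh (cons a i) = i := rfl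

lemma cons_sh (i : ℕ → Fin 4) : cons (i 0) (sh i) = i := by
  funext n; cases n <;> rfl

lemma cons_inj (a : Fin 4) : Function.Injective (cons a) := by
  intro i j h
  have := congrArg sh h
  simpa [sh_cons] using this

lemma lam_facts {l : ℝ} (h : 0 < l ∧ l < (5 - Real.sqrt 21) / 2) :
    0 < l ∧ l < 1 / 4 ∧ 0 < l ^ 2 - 5 * l + 1 := by
  obtain ⟨h0, h1⟩ := h
  have hs : Real.sqrt 21 ^ 2 = 21 := Real.sq_sqrt (by norm_num)
  have hs4 : 4.5 < Real.sqrt 21 := by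
    apply Real.lt_sqrt_of_sq_lt; norm_num
  refine ⟨h0, by linarith, ?_⟩
  have h2 : Real.sqrt 21 < 5 - 2 * l := by linarith
  nlinarith

lemma dg_bound {l : ℝ} (h0 : 0 < l) (h1 : l < 1 / 4) (h2 : 0 < l ^ 2 - 5 * l + 1) (a : Fin 4) :
    0 ≤ dg l a ∧ dg l a ≤ 1 - l := by
  fin_cases a <;> simp [dg] <;> (try constructor) <;> nlinarith

lemma term_bound {l : ℝ} (h0 : 0 < l) (h1 : l < 1 / 4) (h2 : 0 < l ^ 2 - 5 * l + 1)
    (n : ℕ) (a : Fin 4) :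
    0 ≤ l ^ n * dg l a ∧ l ^ n * dg l a ≤ l ^ n * (1 - l) := by
  have := dg_bound h0 h1 h2 a
  exact ⟨mul_nonneg (by positivity) this.1, mul_le_mul_of_nonneg_left this.2 (by positivity)⟩

lemma summ_geo {l : ℝ} (h0 : 0 < l) (h1 : l < 1 / 4) (h2 : 0 < l ^ 2 - 5 * l + 1)
    : HasSum (fun n : ℕ => l ^ n * (1 - l)) 1 := by
  have := (hasSum_geometric_of_lt_one h0.le (by linarith : l < 1)).mul_right (1 - l)
  rwa [inv_mul_cancel₀ (by linarith)] at this

lemma summ {l : ℝ} (h0 : 0 < l) (h1 : l < 1 / 4) (h2 : 0 < l ^ 2 - 5 * l + 1)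
    (i : ℕ → Fin 4) : Summable (fun n => l ^ n * dg l (i n)) :=
  Summable.of_nonneg_of_le (fun n => (term_bound h0 h1 h2 n (i n)).1)
    (fun n => (term_bound h0 h1 h2 n (i n)).2) (summ_geo h0 h1 h2).summable

lemma pr_mem {l : ℝ} (h0 : 0 < l) (h1 : l < 1 / 4) (h2 : 0 < l ^ 2 - 5 * l + 1)
    (i : ℕ → Fin 4) : 0 ≤ pr l i ∧ pr l i ≤ 1 := by
  refine ⟨tsum_nonneg fun n => (term_bound h0 h1 h2 n (i n)).1, ?_⟩
  exact hasSum_le (fun n => (term_bound h0 h1 h2 n (i n)).2) (summ h0 h1 h2 i).hasSum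
    (summ_geo h0 h1 h2)

lemma pr_sh {l : ℝ} (h0 : 0 < l) (h1 : l < 1 / 4) (h2 : 0 < l ^ 2 - 5 * l + 1)
    (i : ℕ → Fin 4) : pr l i = l * pr l (sh i) + dg l (i 0) := by
  unfold pr
  rw [(summ h0 h1 h2 i).tsum_eq_zero_add, ← tsum_mul_left]
  simp only [pow_zero, one_mul, pow_succ, sh]
  rw [add_comm]
  congr 1
  apply tsum_congr
  intro n
  ring

lemma pr_cont {l : ℝ} (h0 : 0 < l) (h1 : l < 1 / 4) (h2 : 0 < l ^ 2 - 5 * l + 1)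
    : Continuous (pr l) := by
  unfold pr
  refine continuous_tsum (u := fun n : ℕ => l ^ n * (1 - l)) ?_ (summ_geo h0 h1 h2).summable ?_
  · intro n
    exact continuous_const.mul ((continuous_of_discreteTopology (f := dg l)).comp
      (continuous_apply n))
  · intro n i
    rw [Real.norm_of_nonneg (term_bound h0 h1 h2 n (i n)).1]
    exact (term_bound h0 h1 h2 n (i n)).2

lemma key_same {l : ℝ} (h0 : 0 < l) (h1 : l < 1 / 4) (h2 : 0 < l ^ 2 - 5 * l + 1)
    {i j : ℕ → Fin 4} (h : pr l i = pr l j) (h' : i 0 = j 0) :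
    pr l (sh i) = pr l (sh j) := by
  rw [pr_sh h0 h1 h2 i, pr_sh h0 h1 h2 j, h'] at h
  have : l * pr l (sh i) = l * pr l (sh j) := by linarith
  exact mul_left_cancel₀ h0.ne' this

lemma pr_cons {l : ℝ} (h0 : 0 < l) (h1 : l < 1 / 4) (h2 : 0 < l ^ 2 - 5 * l + 1)
    {i j : ℕ → Fin 4} (a : Fin 4) (h : pr l i = pr l j) :
    pr l (cons a i) = pr l (cons a j) := by
  rw [pr_sh h0 h1 h2, pr_sh h0 h1 h2 (cons a j), sh_cons, sh_cons, h]; rfl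

lemma pr_two {l : ℝ} (h0 : 0 < l) (h1 : l < 1 / 4) (h2 : 0 < l ^ 2 - 5 * l + 1)
    (i : ℕ → Fin 4) : pr l (cons 1 (cons 3 i)) = pr l (cons 2 (cons 0 i)) := by
  rw [pr_sh h0 h1 h2, pr_sh h0 h1 h2 (cons 2 _), sh_cons, sh_cons,
    pr_sh h0 h1 h2, pr_sh h0 h1 h2 (cons 0 _), sh_cons, sh_cons]
  simp [cons, dg]; ring

/-- the last digit of a point in the rightmost piece -/
lemma digit_three {l : ℝ} (h0 : 0 < l) (h1 : l < 1 / 4) (h2 : 0 < l ^ 2 - 5 * l + 1)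
    {i : ℕ → Fin 4} (h : 1 - l ≤ pr l i) : i 0 = 3 := by
  have hm := pr_mem h0 h1 h2 (sh i)
  rw [pr_sh h0 h1 h2 i] at h
  generalize i 0 = a at *
  fin_cases a <;> simp [dg] at h ⊢ <;> nlinarith

lemma digit_zero {l : ℝ} (h0 : 0 < l) (h1 : l < 1 / 4) (h2 : 0 < l ^ 2 - 5 * l + 1)
    {i : ℕ → Fin 4} (h : pr l i ≤ l) : i 0 = 0 := by
  have hm := pr_mem h0 h1 h2 (sh i)
  rw [pr_sh h0 h1 h2 i] at h
  generalize i 0 = a at *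
  fin_cases a <;> simp [dg] at h ⊢ <;> nlinarith

lemma key_lt {l : ℝ} (h0 : 0 < l) (h1 : l < 1 / 4) (h2 : 0 < l ^ 2 - 5 * l + 1)
    {i j : ℕ → Fin 4} (h : pr l i = pr l j) (h' : i 0 < j 0) :
    ∃ k, i = cons 1 (cons 3 k) ∧ j = cons 2 (cons 0 (sh (sh j))) := by
  have hi := pr_mem h0 h1 h2 (sh i)
  have hj := pr_mem h0 h1 h2 (sh j)
  have e := h
  rw [pr_sh h0 h1 h2 i, pr_sh h0 h1 h2 j] at e
  have hd : i 0 = 1 ∧ j 0 = 2 := by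
    generalize i 0 = a at *
    generalize j 0 = b at *
    fin_cases a <;> fin_cases b <;> simp [dg] at e h' ⊢ <;> nlinarith
  rw [hd.1, hd.2] at e
  simp [dg] at e
  have a1 : sh i 0 = 3 := by
    apply digit_three h0 h1 h2
    have : l * (1 - l) ≤ l * pr l (sh i) := by nlinarith
    exact le_of_mul_le_mul_left this h0
  have a2 : sh j 0 = 0 := by
    apply digit_zero h0 h1 h2
    have : l * pr l (sh j) ≤ l * l := by nlinarith
    exact le_of_mul_le_mul_left this h0
  refine ⟨sh (sh i), ?_, ?_⟩
  · rw [← a1, cons_sh, ← hd.1, cons_sh]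
  · rw [← a2, cons_sh, ← hd.2, cons_sh]

/-- in the switching case -/
lemma cls_switch {l : ℝ} (h0 : 0 < l) (h1 : l < 1 / 4) (h2 : 0 < l ^ 2 - 5 * l + 1)
    {i j : ℕ → Fin 4} (h : pr l i = pr l j) (h' : i 0 ≠ j 0) :
    cls l i = (fun k => cons 1 (cons 3 k)) '' cls l (sh (sh i)) ∪
      (fun k => cons 2 (cons 0 k)) '' cls l (sh (sh i)) := by
  have hi : i = cons 1 (cons 3 (sh (sh i))) ∨ i = cons 2 (cons 0 (sh (sh i))) := by
    rcases lt_or_gt_of_ne h' with hl | hl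
    · obtain ⟨k, e1, -⟩ := key_lt h0 h1 h2 h hl
      left; rw [e1]; rfl
    · obtain ⟨k, -, e2⟩ := key_lt h0 h1 h2 h.symm hl
      exact Or.inr e2
  have hi1 : pr l i = pr l (cons 1 (cons 3 (sh (sh i)))) := by
    rcases hi with hi | hi
    · exact congrArg _ hi
    · rw [pr_two h0 h1 h2]; exact congrArg _ hi
  have hi2 : pr l i = pr l (cons 2 (cons 0 (sh (sh i)))) := by
    rw [← pr_two h0 h1 h2]; exact hi1
  ext k
  constructor
  · intro hk
    have hk : pr l k = pr l i := hk
    have a1 := hk.trans hi1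
    have a2 := hk.trans hi2
    by_cases c : k 0 = 1
    · left
      have b := key_lt h0 h1 h2 a2 (by rw [c]; exact (by decide : (1 : Fin 4) < 2))
      obtain ⟨m, e, -⟩ := b
      subst e
      exact ⟨m, key_same h0 h1 h2 (key_same h0 h1 h2 a1 rfl) rfl, rfl⟩
    · right
      have c2 : k 0 = 2 := by
        rcases lt_or_gt_of_ne c with hl | hl
        · obtain ⟨m, e, -⟩ := key_lt h0 h1 h2 a1 hl
          exact absurd (by rw [e]; rfl) c
        · obtain ⟨m, -, e⟩ := key_lt h0 h1 h2 a1.symm hl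
          rw [e]; rfl
      obtain ⟨m, -, e⟩ := key_lt h0 h1 h2 a1.symm (by rw [c2]; exact (by decide : (1 : Fin 4) < 2))
      refine ⟨sh (sh k), ?_, e.symm⟩
      have e1 : sh k 0 = 0 := congrFun e 1
      have b1 := key_same h0 h1 h2 a2 c2
      have b2 := key_same h0 h1 h2 b1 e1
      exact b2
  · rintro (⟨m, hm, rfl⟩ | ⟨m, hm, rfl⟩)
    · exact (pr_cons h0 h1 h2 _ (pr_cons h0 h1 h2 _ hm)).trans hi1.symm
    · exact (pr_cons h0 h1 h2 _ (pr_cons h0 h1 h2 _ hm)).trans hi2.symm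

lemma cls_noswitch {l : ℝ} (h0 : 0 < l) (h1 : l < 1 / 4) (h2 : 0 < l ^ 2 - 5 * l + 1)
    {i : ℕ → Fin 4} (h : ∀ j, pr l i = pr l j → i 0 = j 0) :
    cls l i = cons (i 0) '' cls l (sh i) := by
  ext k
  constructor
  · intro hk
    have hk : pr l k = pr l i := hk
    have := h k hk.symm
    exact ⟨sh k, key_same h0 h1 h2 hk this.symm, by rw [this, cons_sh]⟩
  · rintro ⟨m, hm, rfl⟩
    have := pr_cons h0 h1 h2 (i 0) hm
    rwa [cons_sh] at this

lemma card_switch {l : ℝ} (h0 : 0 < l) (h1 : l < 1 / 4) (h2 : 0 < l ^ 2 - 5 * l + 1)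
    {i j : ℕ → Fin 4} (h : pr l i = pr l j) (h' : i 0 ≠ j 0) :
    (cls l i).encard = 2 * (cls l (sh (sh i))).encard := by
  rw [cls_switch h0 h1 h2 h h', Set.encard_union_eq]
  · rw [Function.Injective.encard_image, Function.Injective.encard_image, two_mul]
    · exact (cons_inj 2).comp (cons_inj 0)
    · exact (cons_inj 1).comp (cons_inj 3)
  · rw [Set.disjoint_left]
    rintro _ ⟨a, -, rfl⟩ ⟨b, -, hb⟩
    have := congrFun hb 0
    simp [cons] at this

lemma card_one {l : ℝ} (h0 : 0 < l) (h1 : l < 1 / 4) (h2 : 0 < l ^ 2 - 5 * l + 1)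
    {i : ℕ → Fin 4} (h : (cls l i).Subsingleton) : (cls l i).encard = 1 := by
  rw [Set.encard_eq_one]
  exact ⟨i, h.eq_singleton_of_mem rfl⟩

lemma sub_sh {l : ℝ} (h0 : 0 < l) (h1 : l < 1 / 4) (h2 : 0 < l ^ 2 - 5 * l + 1)
    {i : ℕ → Fin 4} (h : (cls l i).Subsingleton) : (cls l (sh i)).Subsingleton := by
  intro a ha b hb
  have key : ∀ a ∈ cls l (sh i), cons (i 0) a ∈ cls l i := by
    intro a ha
    have := pr_cons h0 h1 h2 (i 0) ha
    rwa [cons_sh] at this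
  exact cons_inj _ (h (key a ha) (key b hb))

lemma pow_two {l : ℝ} (h0 : 0 < l) (h1 : l < 1 / 4) (h2 : 0 < l ^ 2 - 5 * l + 1)
    (n : ℕ) : ∀ i, (cls l (sh^[n] i)).Subsingleton →
    ∃ k : ℕ, (cls l i).encard = ((2 ^ k : ℕ) : ℕ∞) := by
  induction n using Nat.strong_induction_on with
  | _ n ih =>
    intro i hi
    rcases n with _ | n
    · exact ⟨0, by simpa using card_one h0 h1 h2 hi⟩
    · by_cases c : ∀ j, pr l i = pr l j → i 0 = j 0
      · obtain ⟨k, hk⟩ := ih n (by omega) (sh i) hi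
        refine ⟨k, ?_⟩
        rw [cls_noswitch h0 h1 h2 c, (cons_inj _).encard_image, hk]
      · push Not at c
        obtain ⟨j, hj, hj'⟩ := c
        have : ∃ k : ℕ, (cls l (sh (sh i))).encard = ((2 ^ k : ℕ) : ℕ∞) := by
          rcases n with _ | n
          · exact ih 0 (by omega) _ (sub_sh h0 h1 h2 hi)
          · exact ih n (by omega) _ hi
        obtain ⟨k, hk⟩ := this
        refine ⟨k + 1, ?_⟩
        rw [card_switch h0 h1 h2 hj hj', hk, pow_succ, mul_comm]
        push_cast
        rfl

/-- prefix the first `n` digits of `i` to a tail -/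
lemma splice {l : ℝ} (h0 : 0 < l) (h1 : l < 1 / 4) (h2 : 0 < l ^ 2 - 5 * l + 1)
    (n : ℕ) : ∀ i m : ℕ → Fin 4, pr l m = pr l (sh^[n] i) →
    ∃ k, pr l k = pr l i ∧ (∀ t < n, k t = i t) ∧ sh^[n] k = m := by
  induction n with
  | zero => intro i m h; exact ⟨m, h, by simp, rfl⟩
  | succ n ih =>
    intro i m h
    obtain ⟨k, hk, hk1, hk2⟩ := ih (sh i) m h
    refine ⟨cons (i 0) k, ?_, ?_, hk2⟩
    · have := pr_cons h0 h1 h2 (i 0) hk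
      rwa [cons_sh] at this
    · rintro (_ | t) ht
      · rfl
      · exact hk1 t (by omega)

lemma main {l : ℝ} (h0 : 0 < l) (h1 : l < 1 / 4) (h2 : 0 < l ^ 2 - 5 * l + 1)
    (i : ℕ → Fin 4) :
    (∃ k : ℕ, (cls l i).encard = ((2 ^ k : ℕ) : ℕ∞)) ∨ ¬ (cls l i).Countable := by
  by_contra hcon
  push Not at hcon
  obtain ⟨hno, hc⟩ := hcon
  have hperf : Perfect (cls l i) := by
    refine ⟨isClosed_eq (pr_cont h0 h1 h2) continuous_const, ?_⟩
    intro j hj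
    have hj : pr l j = pr l i := hj
    have hcj : cls l j = cls l i := by unfold cls; rw [hj]
    rw [accPt_iff_nhds]
    intro u hu
    obtain ⟨n, hn⟩ : ∃ n : ℕ, ∀ k : ℕ → Fin 4, (∀ t < n, k t = j t) → k ∈ u := by
      rw [nhds_pi, Filter.mem_pi] at hu
      obtain ⟨I, hI, t, ht, htu⟩ := hu
      obtain ⟨n, hn⟩ := hI.bddAbove
      refine ⟨n + 1, fun k hk => htu ?_⟩
      intro s hs
      rw [hk s (Nat.lt_succ_of_le (hn hs))]
      exact mem_of_mem_nhds (ht s)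
    have hns : ¬ (cls l (sh^[n] j)).Subsingleton := by
      intro hs
      obtain ⟨k, hk⟩ := pow_two h0 h1 h2 n j hs
      exact hno k (hcj ▸ hk)
    have : ∃ m ∈ cls l (sh^[n] j), m ≠ sh^[n] j := by
      by_contra hm
      push Not at hm
      exact hns fun a ha b hb => (hm a ha).trans (hm b hb).symm
    obtain ⟨m, hm, hne⟩ := this
    obtain ⟨k, hk, hk1, hk2⟩ := splice h0 h1 h2 n j m hm
    refine ⟨k, ⟨hn k hk1, hk.trans hj⟩, ?_⟩
    rintro rfl
    exact hne hk2.symm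
  let _ := TopologicalSpace.upgradeIsCompletelyMetrizable (ℕ → Fin 4)
  obtain ⟨g, hg, -, hinj⟩ := hperf.exists_nat_bool_injection ⟨i, rfl⟩
  have h3 : (Set.range g).Countable := hc.mono hg
  have h4 : Countable (ℕ → Bool) := by
    have : Countable (Set.range g) := h3.to_subtype
    exact (Set.rangeFactorization_injective.2 hinj).countable
  have h5 := Cardinal.mk_le_aleph0_iff.2 h4
  have h6 : Cardinal.mk (ℕ → Bool) = 2 ^ Cardinal.aleph0 := by
    rw [← Cardinal.power_def]; simp
  rw [h6] at h5
  exact absurd h5 (not_le.2 (Cardinal.cantor _))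

lemma approx_eq (l : ℝ) (f : Fin 4 → ℝ → ℝ) (hf : ∀ a x, f a x = l * x + dg l a) (n : ℕ) :
    ∀ i, codingApprox f i n = ∑ m ∈ Finset.range n, l ^ m * dg l (i m) := by
  induction n with
  | zero => intro i; simp [codingApprox]
  | succ n ih =>
    intro i
    rw [codingApprox, ih, hf, Finset.sum_range_succ', Finset.mul_sum]
    simp only [pow_zero, one_mul]
    congr 1
    apply Finset.sum_congr rfl
    intro m _
    ring

lemma exists_coding {l : ℝ} (h0 : 0 < l) (h1 : l < 1 / 4) (h2 : 0 < l ^ 2 - 5 * l + 1)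
    (f : Fin 4 → ℝ → ℝ) (hf : ∀ a x, f a x = l * x + dg l a)
    (K : Set ℝ) (hKcpt : IsCompact K) (hK : ∀ x ∈ K, ∃ a, ∃ y ∈ K, f a y = x)
    (x : ℝ) (hx : x ∈ K) : ∃ i, pr l i = x := by
  choose! g h hmem hgh using hK
  have hit : ∀ n, h^[n] x ∈ K := by
    intro n
    induction n with
    | zero => exact hx
    | succ n ih => rw [Function.iterate_succ_apply']; exact hmem _ ih
  refine ⟨fun n => g (h^[n] x), ?_⟩
  have hsum : ∀ n, ∑ m ∈ Finset.range n, l ^ m * dg l (g (h^[m] x)) = x - l ^ n * h^[n] x := by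
    intro n
    induction n with
    | zero => simp
    | succ n ih =>
      rw [Finset.sum_range_succ, ih, Function.iterate_succ_apply']
      have := hgh _ (hit n)
      rw [hf] at this
      rw [pow_succ]
      linear_combination l ^ n * this
  have ht := (summ h0 h1 h2 (fun n => g (h^[n] x))).hasSum.tendsto_sum_nat
  simp only [hsum] at ht
  obtain ⟨C, hC⟩ := hKcpt.isBounded.exists_norm_le
  have hz : Tendsto (fun n => l ^ n * h^[n] x) atTop (𝓝 0) := by
    have hp := (tendsto_pow_atTop_nhds_zero_of_lt_one h0.le (by linarith : l < 1)).mul_const C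
    rw [zero_mul] at hp
    refine squeeze_zero_norm (fun n => ?_) hp
    rw [norm_mul, Real.norm_of_nonneg (by positivity : 0 ≤ l ^ n)]
    exact mul_le_mul_of_nonneg_left (hC _ (hit n)) (by positivity)
  have ht' := (tendsto_const_nhds (x := x)).sub hz
  rw [sub_zero] at ht'
  exact tendsto_nhds_unique ht ht'

end Coding4

/-- every `x ∈ K` has exactly `2^k` codings for some `k ≥ 0`,
or uncountably many codings. -/
theorem statement3
    (lam : ℝ) (hlam : 0 < lam ∧ lam < (5 - Real.sqrt 21) / 2)
    (f : Fin 4 → ℝ → ℝ)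
    (hf : f = ![fun x => lam * x, fun x => lam * x + 2 * lam,
      fun x => lam * x + 3 * lam - lam ^ 2, fun x => lam * x + 1 - lam])
    (K : Set ℝ) (hKne : K.Nonempty) (hKcpt : IsCompact K)
    (hK : K = f 0 '' K ∪ f 1 '' K ∪ f 2 '' K ∪ f 3 '' K)
    (U : ℕ → Set ℝ)
    (hU : ∀ k : ℕ, U k = {x ∈ K | (codings f x).encard = (k : ℕ∞)})
    (x : ℝ) (hx : x ∈ K) :
    (∃ k : ℕ, (codings f x).encard = ((2 ^ k : ℕ) : ℕ∞)) ∨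
      ¬ (codings f x).Countable := by
  obtain ⟨h0, h1, h2⟩ := Coding4.lam_facts hlam
  have hf' : ∀ a y, f a y = lam * y + Coding4.dg lam a := by
    intro a y
    rw [hf]
    fin_cases a <;> simp [Coding4.dg] <;> ring
  have hK' : ∀ y ∈ K, ∃ a, ∃ z ∈ K, f a z = y := by
    intro y hy
    rw [hK] at hy
    rcases hy with ((⟨z, hz, e⟩ | ⟨z, hz, e⟩) | ⟨z, hz, e⟩) | ⟨z, hz, e⟩
    exacts [⟨_, z, hz, e⟩, ⟨_, z, hz, e⟩, ⟨_, z, hz, e⟩, ⟨_, z, hz, e⟩]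
  obtain ⟨i, hi⟩ := Coding4.exists_coding h0 h1 h2 f hf' K hKcpt hK' x hx
  have hcod : codings f x = Coding4.cls lam i := by
    ext j
    have ht : Tendsto (codingApprox f j) atTop (𝓝 (Coding4.pr lam j)) := by
      have := (Coding4.summ h0 h1 h2 j).hasSum.tendsto_sum_nat
      refine this.congr fun n => ?_
      rw [Coding4.approx_eq lam f hf' n j]
    constructor
    · intro hj
      exact (tendsto_nhds_unique ht hj).trans hi.symm
    · intro hj
      have hj : Coding4.pr lam j = Coding4.pr lam i := hj
      rw [hj, hi] at ht
      exact ht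
  rw [hcod]
  exact Coding4.main h0 h1 h2 i
end

section
/- The set of unique expansions Ũ_β is a subshift of finite type if and only if the quasi-greedy orbit of 1 falls into the interval (1/β, 1/(β(β−1))], i.e. there exists n ≥ 1 such that Q^n(1) ∈ (1/β, 1/(β(β−1))]. -/
/-- The value `Σ_{n≥1} a_n β^{-n}` of a digit sequence (indexed from 0, so `a i = a_{i+1}`). -/
noncomputable def betaVal (β : ℝ) (a : ℕ → ℕ) : ℝ := ∑' n : ℕ, (a n : ℝ) / β ^ (n + 1)

/-- `Ũ_β`: the set of 0-1 sequences that are the unique β-expansion of their value. -/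
def UTilde (β : ℝ) : Set (ℕ → ℕ) :=
  {a | (∀ n, a n ≤ 1) ∧
    ∀ b : ℕ → ℕ, (∀ n, b n ≤ 1) → betaVal β b = betaVal β a → b = a}

/-- The word `w` occurs in the sequence `x` starting at position `n`. -/
def OccursAt (w : List ℕ) (x : ℕ → ℕ) (n : ℕ) : Prop :=
  ∀ i : Fin w.length, x (n + i.1) = w.get i

/-- `Y` is a subshift of finite type inside the ambient full shift `{0,1}^ℕ`: there is a
finite set `F` of forbidden words such that `Y` consists exactly of the 0-1 sequences in
which no word of `F` occurs. -/
def IsSFT01 (Y : Set (ℕ → ℕ)) : Prop :=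
  ∃ F : Set (List ℕ), F.Finite ∧
    Y = {x | (∀ n, x n ≤ 1) ∧ ∀ w ∈ F, ∀ n, ¬ OccursAt w x n}

/-- Strict lexicographic order on sequences. -/
def LexLt (a b : ℕ → ℕ) : Prop :=
  ∃ n, (∀ k < n, a k = b k) ∧ a n < b n

/-- `η` is the quasi-greedy expansion of `1` in base `β`: the lexicographically largest
0-1 sequence with infinitely many digits `1` whose value is `1`. -/
def QuasiGreedy (β : ℝ) (η : ℕ → ℕ) : Prop :=
  (∀ n, η n ≤ 1) ∧ (∀ N, ∃ n ≥ N, η n = 1) ∧ betaVal β η = 1 ∧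
    ∀ ζ : ℕ → ℕ, (∀ n, ζ n ≤ 1) → (∀ N, ∃ n ≥ N, ζ n = 1) →
      betaVal β ζ = 1 → ζ ≠ η → LexLt ζ η

namespace BetaU

/-- Shift of a sequence. -/
def sh (n : ℕ) (a : ℕ → ℕ) : ℕ → ℕ := fun k => a (n + k)

/-- Digitwise complement. -/
def cj (a : ℕ → ℕ) : ℕ → ℕ := fun k => 1 - a k

/-- 0-1 sequences. -/
def B (a : ℕ → ℕ) : Prop := ∀ n, a n ≤ 1

theorem B_sh {a : ℕ → ℕ} (h : B a) (n : ℕ) : B (sh n a) := fun k => h (n + k)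

theorem B_cj (a : ℕ → ℕ) : B (cj a) := fun k => Nat.sub_le _ _

theorem sh_sh (m n : ℕ) (a : ℕ → ℕ) : sh m (sh n a) = sh (n + m) a := by
  funext k; simp [sh, add_assoc]

theorem sh_zero (a : ℕ → ℕ) : sh 0 a = a := by
  funext k; simp [sh]

theorem sh_cj (n : ℕ) (a : ℕ → ℕ) : sh n (cj a) = cj (sh n a) := rfl

theorem cj_cj {a : ℕ → ℕ} (h : B a) : cj (cj a) = a := by
  funext k; have := h k; simp only [cj]; omega

theorem hasSum_geo {β : ℝ} (hβ : 1 < β) :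
    HasSum (fun n : ℕ => (1 : ℝ) / β ^ (n + 1)) (1 / (β - 1)) := by
  have h0 : (0 : ℝ) < β := by linarith
  have h := (hasSum_geometric_of_lt_one (r := β⁻¹) (by positivity) (inv_lt_one_of_one_lt₀ hβ)).mul_left (β⁻¹)
  have e1 : (fun n : ℕ => (1 : ℝ) / β ^ (n + 1)) = fun i => β⁻¹ * β⁻¹ ^ i := by
    funext n; rw [pow_succ, inv_pow]; field_simp
  have e2 : 1 / (β - 1) = β⁻¹ * (1 - β⁻¹)⁻¹ := by
    rw [← mul_inv, mul_sub, mul_inv_cancel₀ h0.ne', mul_one, one_div]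
  rw [e1, e2]; exact h

theorem term_le {β : ℝ} (hβ : 1 < β) {a : ℕ → ℕ} (ha : B a) (n : ℕ) :
    (a n : ℝ) / β ^ (n + 1) ≤ 1 / β ^ (n + 1) := by
  have h0 : (0 : ℝ) < β := by linarith
  have : (a n : ℝ) ≤ 1 := by exact_mod_cast ha n
  gcongr

theorem summ {β : ℝ} (hβ : 1 < β) {a : ℕ → ℕ} (ha : B a) :
    Summable (fun n : ℕ => (a n : ℝ) / β ^ (n + 1)) := by
  have h0 : (0 : ℝ) < β := by linarith
  exact Summable.of_nonneg_of_le (fun n => by positivity) (term_le hβ ha) (hasSum_geo hβ).summable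

theorem v_nonneg {β : ℝ} (hβ : 1 < β) (a : ℕ → ℕ) : 0 ≤ betaVal β a := by
  have h0 : (0 : ℝ) < β := by linarith
  exact tsum_nonneg (fun n => by positivity)

theorem v_le {β : ℝ} (hβ : 1 < β) {a : ℕ → ℕ} (ha : B a) : betaVal β a ≤ 1 / (β - 1) := by
  rw [← (hasSum_geo hβ).tsum_eq]
  exact (summ hβ ha).tsum_le_tsum (term_le hβ ha) (hasSum_geo hβ).summable

theorem v_cj {β : ℝ} (hβ : 1 < β) {a : ℕ → ℕ} (ha : B a) :
    betaVal β (cj a) = 1 / (β - 1) - betaVal β a := by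
  have h := ((hasSum_geo hβ).sub (summ hβ ha).hasSum).tsum_eq
  unfold betaVal
  rw [← h]
  congr 1; funext n
  have : ((cj a n : ℕ) : ℝ) = 1 - a n := by
    simp only [cj]; rw [Nat.cast_sub (ha n)]; simp
  rw [this]; ring

theorem v_step {β : ℝ} (hβ : 1 < β) {a : ℕ → ℕ} (ha : B a) :
    β * betaVal β a = a 0 + betaVal β (sh 1 a) := by
  have h0 : (0 : ℝ) < β := by linarith
  unfold betaVal
  rw [(summ hβ ha).tsum_eq_zero_add, mul_add, ← tsum_mul_left]
  congr 1
  · simp only [zero_add, pow_one]; field_simp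
  · congr 1; funext n
    simp only [sh, add_comm 1 n]
    rw [pow_succ β (n+1)]; field_simp

theorem v_step' {β : ℝ} (hβ : 1 < β) {a : ℕ → ℕ} (ha : B a) (n : ℕ) :
    β * betaVal β (sh n a) = a n + betaVal β (sh (n + 1) a) := by
  have := v_step hβ (B_sh ha n)
  rw [sh_sh] at this
  simpa [sh] using this

/-- Agreement on a prefix. -/
theorem v_diff {β : ℝ} (hβ : 1 < β) {a b : ℕ → ℕ} (ha : B a) (hb : B b) (n : ℕ)
    (h : ∀ i < n, a i = b i) :
    β ^ n * (betaVal β a - betaVal β b) = betaVal β (sh n a) - betaVal β (sh n b) := by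
  induction n with
  | zero => simp [sh_zero]
  | succ n ih =>
    have h1 := ih (fun i hi => h i (by omega))
    have h2 := v_step' hβ ha n
    have h3 := v_step' hβ hb n
    have h4 : (a n : ℝ) = b n := by rw [h n (by omega)]
    rw [pow_succ]
    linear_combination β * h1 + h2 - h3 + h4

/-- Existence of expansions with infinitely many ones. -/
theorem exists_exp_pos {β : ℝ} (hβ : 1 < β) (hβ2 : β < 2) (y : ℝ) (hy : 0 < y)
    (hy2 : y ≤ 1 / (β - 1)) :
    ∃ d : ℕ → ℕ, B d ∧ betaVal β d = y ∧ ∀ N, ∃ n ≥ N, d n = 1 := by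
  classical
  have hb : 0 < β - 1 := by linarith
  have hR : 1 ≤ 1 / (β - 1) := by rw [le_div_iff₀ hb]; linarith
  have hRR : β * (1 / (β - 1)) - 1 = 1 / (β - 1) := by field_simp; ring
  let f : ℝ → ℕ := fun y => if 1 < β * y then 1 else 0
  let T : ℝ → ℝ := fun y => β * y - f y
  let Y : ℕ → ℝ := fun n => T^[n] y
  let d : ℕ → ℕ := fun n => f (Y n)
  have hYs : ∀ n, Y (n + 1) = β * Y n - d n := fun n => Function.iterate_succ_apply' T n y
  have hd : B d := by
    intro n; simp only [d, f]; split_ifs <;> simp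
  have hinv : ∀ n, 0 < Y n ∧ Y n ≤ 1 / (β - 1) := by
    intro n
    induction n with
    | zero => exact ⟨hy, hy2⟩
    | succ n ih =>
      rw [hYs]
      simp only [d, f]
      split_ifs with h
      · push_cast
        refine ⟨by linarith, ?_⟩
        rw [← hRR]
        have := mul_le_mul_of_nonneg_left ih.2 (by linarith : 0 ≤ β)
        linarith
      · push_cast
        refine ⟨by nlinarith [ih.1], by linarith⟩
  have hdiff : ∀ n, β ^ n * (betaVal β d - y) = betaVal β (sh n d) - Y n := by
    intro n
    induction n with
    | zero => simp [sh_zero, Y]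
    | succ n ih =>
      have h2 := v_step' hβ hd n
      rw [pow_succ, hYs]
      linear_combination β * ih + h2
  have hval : betaVal β d = y := by
    by_contra hne
    have hpos : 0 < |betaVal β d - y| := abs_pos.mpr (sub_ne_zero.mpr hne)
    obtain ⟨n, hn⟩ := pow_unbounded_of_one_lt ((1 / (β - 1)) / |betaVal β d - y|) hβ
    rw [div_lt_iff₀ hpos] at hn
    have h1 : β ^ n * |betaVal β d - y| = |betaVal β (sh n d) - Y n| := by
      rw [← hdiff, abs_mul, abs_of_pos (by positivity : (0:ℝ) < β ^ n)]
    have h2 : |betaVal β (sh n d) - Y n| ≤ 1 / (β - 1) := by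
      rw [abs_le]
      have := hinv n
      have := v_nonneg hβ (sh n d)
      have := v_le hβ (B_sh hd n)
      constructor <;> linarith
    linarith
  refine ⟨d, hd, hval, ?_⟩
  intro N
  by_contra hcon
  push Not at hcon
  have h1 := hdiff N
  rw [hval] at h1
  have h2 : betaVal β (sh N d) = 0 := by
    unfold betaVal
    have : ∀ k, sh N d k = 0 := by
      intro k
      have h3 := hcon (N + k) (by omega)
      have h4 := hd (N + k)
      simp only [sh]; omega
    simp [this]
  have := (hinv N).1
  rw [h2] at h1; linarith

theorem exists_exp {β : ℝ} (hβ : 1 < β) (hβ2 : β < 2) (y : ℝ) (hy : 0 ≤ y)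
    (hy2 : y ≤ 1 / (β - 1)) :
    ∃ d : ℕ → ℕ, B d ∧ betaVal β d = y := by
  rcases hy.eq_or_lt with h | h
  · refine ⟨fun _ => 0, fun _ => by simp, ?_⟩
    simp [betaVal, ← h]
  · obtain ⟨d, h1, h2, _⟩ := exists_exp_pos hβ hβ2 y h hy2
    exact ⟨d, h1, h2⟩

/-- Prefix of `a` of length `n`, then digit `c`, then `d`. -/
def glue (a : ℕ → ℕ) (n c : ℕ) (d : ℕ → ℕ) : ℕ → ℕ :=
  fun k => if k < n then a k else if k = n then c else d (k - (n + 1))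

theorem glue_lt (a : ℕ → ℕ) (n c : ℕ) (d : ℕ → ℕ) (k : ℕ) (h : k < n) : glue a n c d k = a k := by
  simp [glue, h]

theorem glue_eq (a : ℕ → ℕ) (n c : ℕ) (d : ℕ → ℕ) : glue a n c d n = c := by
  simp [glue]

theorem glue_sh (a : ℕ → ℕ) (n c : ℕ) (d : ℕ → ℕ) : sh (n + 1) (glue a n c d) = d := by
  funext k
  simp only [sh, glue]
  rw [if_neg (by omega), if_neg (by omega)]
  congr 1; omega

theorem glue_B {a : ℕ → ℕ} {n c : ℕ} {d : ℕ → ℕ} (ha : B a) (hc : c ≤ 1) (hd : B d) :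
    B (glue a n c d) := by
  intro k
  simp only [glue]
  split_ifs
  · exact ha k
  · exact hc
  · exact hd _

theorem glue_val {β : ℝ} (hβ : 1 < β) {a : ℕ → ℕ} {n c : ℕ} {d : ℕ → ℕ} (ha : B a) (hc : c ≤ 1)
    (hd : B d) (h : (c : ℝ) + betaVal β d = a n + betaVal β (sh (n + 1) a)) :
    betaVal β (glue a n c d) = betaVal β a := by
  have hg : B (glue a n c d) := glue_B ha hc hd
  have h1 := v_diff hβ hg ha n (fun i hi => glue_lt a n c d i hi)
  have h2 := v_step' hβ hg n
  have h3 := v_step' hβ ha n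
  rw [glue_eq, glue_sh] at h2
  have h0 : (0 : ℝ) < β := by linarith
  have h4 : β ^ (n + 1) * (betaVal β (glue a n c d) - betaVal β a) = 0 := by
    rw [pow_succ]
    linear_combination β * h1 + h2 - h3 + h
  have h5 : β ^ (n + 1) ≠ 0 := by positivity
  have := (mul_eq_zero.mp h4).resolve_left h5
  linarith

/-- Value criterion for unique expansions. -/
def C (β : ℝ) (a : ℕ → ℕ) : Prop :=
  ∀ n, (a n = 0 → betaVal β (sh (n + 1) a) < 1) ∧
    (a n = 1 → 1 / (β - 1) - 1 < betaVal β (sh (n + 1) a))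

theorem first_diff {a b : ℕ → ℕ} (h : a ≠ b) : ∃ n, (∀ i < n, a i = b i) ∧ a n ≠ b n := by
  classical
  have : ∃ n, a n ≠ b n := by
    by_contra hc; push Not at hc; exact h (funext hc)
  refine ⟨Nat.find this, fun i hi => ?_, Nat.find_spec this⟩
  by_contra hc
  exact Nat.find_min this hi hc

theorem mem_U {β : ℝ} (hβ : 1 < β) (hβ2 : β < 2) (a : ℕ → ℕ) :
    a ∈ UTilde β ↔ B a ∧ C β a := by
  have hb : 0 < β - 1 := by linarith
  constructor
  · rintro ⟨ha, hu⟩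
    refine ⟨ha, fun n => ⟨fun h => ?_, fun h => ?_⟩⟩
    · by_contra hc
      push Not at hc
      obtain ⟨d, hd, hv⟩ := exists_exp hβ hβ2 (betaVal β (sh (n + 1) a) - 1) (by linarith)
        (by have := v_le hβ (B_sh ha (n+1)); linarith)
      have h1 := hu (glue a n 1 d) (glue_B ha le_rfl hd)
        (glue_val hβ ha le_rfl hd (by rw [hv, h]; push_cast; ring))
      have h2 := congrFun h1 n
      rw [glue_eq] at h2; omega
    · by_contra hc
      push Not at hc
      obtain ⟨d, hd, hv⟩ := exists_exp hβ hβ2 (betaVal β (sh (n + 1) a) + 1)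
        (by have := v_nonneg hβ (sh (n+1) a); linarith)
        (by linarith)
      have h1 := hu (glue a n 0 d) (glue_B ha (by simp) hd)
        (glue_val hβ ha (by simp) hd (by rw [hv, h]; push_cast; ring))
      have h2 := congrFun h1 n
      rw [glue_eq] at h2; omega
  · rintro ⟨ha, hC⟩
    refine ⟨ha, fun b hb' hv => ?_⟩
    by_contra hne
    obtain ⟨n, h1, h2⟩ := first_diff hne
    have h3 := v_diff hβ hb' ha n h1
    rw [hv, sub_self, mul_zero] at h3
    have h4 := v_step' hβ hb' n
    have h5 := v_step' hβ ha n
    have h6 : betaVal β (sh n a) = betaVal β (sh n b) := by linarith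
    rw [h6] at h5
    have hbn := hb' n
    have han := ha n
    have h7 := v_nonneg hβ (sh (n+1) b)
    have h8 := v_le hβ (B_sh hb' (n+1))
    have hcase : (a n = 0 ∧ b n = 1) ∨ (a n = 1 ∧ b n = 0) := by omega
    rcases hcase with ⟨e1, e2⟩ | ⟨e1, e2⟩
    · have := (hC n).1 e1
      rw [e1] at h5; rw [e2] at h4; push_cast at h4 h5; linarith
    · have := (hC n).2 e1
      rw [e1] at h5; rw [e2] at h4; push_cast at h4 h5; linarith

theorem C_cj {β : ℝ} (hβ : 1 < β) {a : ℕ → ℕ} (ha : B a) (h : C β a) : C β (cj a) := by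
  intro n
  have h1 := h n
  have h2 := ha n
  rw [sh_cj, v_cj hβ (B_sh ha _)]
  refine ⟨fun e => ?_, fun e => ?_⟩
  · have := h1.2 (by simp only [cj] at e; omega)
    linarith
  · have := h1.1 (by simp only [cj] at e; omega)
    linarith

/-- Quasi-greedy tails after a zero are at most one. -/
theorem Q_le_of_zero {β : ℝ} (hβ : 1 < β) (hβ2 : β < 2) {η : ℕ → ℕ} (hη : QuasiGreedy β η)
    (n : ℕ) (h : η n = 0) : betaVal β (sh (n + 1) η) ≤ 1 := by
  obtain ⟨hB, hinf, hval, hmax⟩ := hη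
  by_contra hc
  push Not at hc
  obtain ⟨d, hd, hv, hi⟩ := exists_exp_pos hβ hβ2 (betaVal β (sh (n + 1) η) - 1) (by linarith)
    (by have := v_le hβ (B_sh hB (n+1)); linarith)
  have hg := glue_val (n := n) (c := 1) hβ hB le_rfl hd (by rw [hv, h]; push_cast; ring)
  have hne : glue η n 1 d ≠ η := by
    intro he
    have h2 := congrFun he n
    rw [glue_eq] at h2; omega
  obtain ⟨m, hm1, hm2⟩ := hmax (glue η n 1 d) (glue_B hB le_rfl hd) (by
    intro N
    obtain ⟨k, hk, hk1⟩ := hi N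
    refine ⟨n + 1 + k, by omega, ?_⟩
    have := congrFun (glue_sh η n 1 d) k
    exact this.trans hk1) (hg.trans hval) hne
  rcases lt_trichotomy m n with hlt | heq | hgt
  · rw [glue_lt _ _ _ _ _ hlt] at hm2; omega
  · subst heq; rw [glue_eq] at hm2; omega
  · have := hm1 n hgt
    rw [glue_eq] at this; omega

theorem Q_le_one {β : ℝ} (hβ : 1 < β) (hβ2 : β < 2) {η : ℕ → ℕ} (hη : QuasiGreedy β η)
    (n : ℕ) : betaVal β (sh n η) ≤ 1 := by
  induction n with
  | zero => rw [sh_zero, hη.2.2.1]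
  | succ n ih =>
    have hn := hη.1 n
    rcases Nat.eq_zero_or_pos (η n) with h | h
    · exact Q_le_of_zero hβ hβ2 hη n h
    · have h1 : η n = 1 := by omega
      have h2 := v_step' hβ hη.1 n
      rw [h1] at h2; push_cast at h2
      nlinarith

theorem Q_pos {β : ℝ} (hβ : 1 < β) {η : ℕ → ℕ} (hη : QuasiGreedy β η)
    (n : ℕ) : 0 < betaVal β (sh n η) := by
  have h0 : (0 : ℝ) < β := by linarith
  obtain ⟨k, hk, hk1⟩ := hη.2.1 n
  have hs := summ hβ (B_sh hη.1 n)
  refine hs.tsum_pos (fun i => by positivity) (k - n) ?_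
  have : sh n η (k - n) = 1 := by
    simp only [sh]; rw [← hk1]; congr 1; omega
  rw [this]; positivity

/-- `x` is lexicographically below `η` within the first `m` digits. -/
def L (η : ℕ → ℕ) (m : ℕ) (x : ℕ → ℕ) : Prop :=
  ∃ j < m, (∀ i < j, x i = η i) ∧ x j < η j

theorem L_congr {η : ℕ → ℕ} {m : ℕ} {x y : ℕ → ℕ} (h : ∀ i < m, x i = y i) (hx : L η m x) :
    L η m y := by
  obtain ⟨j, hj, h1, h2⟩ := hx
  refine ⟨j, hj, fun i hi => ?_, ?_⟩
  · rw [← h i (by omega), h1 i hi]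
  · rw [← h j hj]; exact h2

theorem L_of_C {β : ℝ} (hβ : 1 < β) (hβ2 : β < 2) {η : ℕ → ℕ} (hη : QuasiGreedy β η)
    (n : ℕ) (hn : η n = 1) (hQ : betaVal β (sh (n + 1) η) ≤ 1 / (β - 1) - 1)
    {a : ℕ → ℕ} (ha : B a) (hC : C β a) (k : ℕ) (hk : a k = 0) :
    L η (n + 1) (sh (k + 1) a) := by
  have h0 : (0 : ℝ) < β := by linarith
  have hb := B_sh ha (k + 1)
  have hv := (hC k).1 hk
  by_cases hall : ∀ i < n + 1, sh (k + 1) a i = η i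
  · exfalso
    have h1 := v_diff hβ hb hη.1 (n + 1) hall
    have h2 : a (k + 1 + n) = 1 := by
      have := hall n (by omega); simp only [sh] at this; omega
    have h3 := (hC _).2 h2
    rw [sh_sh, hη.2.2.1] at h1
    rw [show k + 1 + n + 1 = k + 1 + (n + 1) by ring] at h3
    have h4 : 0 < β ^ (n + 1) * (1 - betaVal β (sh (k + 1) a)) := mul_pos (by positivity) (by linarith)
    nlinarith
  · push Not at hall
    obtain ⟨i0, hi0, hne⟩ := hall
    have hne' : sh (k + 1) a ≠ η := fun h => hne (congrFun h i0)
    obtain ⟨j, hj1, hj2⟩ := first_diff hne'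
    have hjn : j < n + 1 := by
      by_contra hc
      exact hne (hj1 i0 (by omega))
    refine ⟨j, hjn, hj1, ?_⟩
    by_contra hc
    have e1 : sh (k + 1) a j = 1 := by have := hb j; omega
    have e2 : η j = 0 := by have := hb j; omega
    have h1 := v_diff hβ hb hη.1 j hj1
    have h2 := v_step' hβ hb j
    have h3 := v_step' hβ hη.1 j
    have h4 := Q_le_one hβ hβ2 hη (j + 1)
    have h5 := v_nonneg hβ (sh (j + 1) (sh (k + 1) a))
    rw [e1] at h2; rw [e2] at h3; push_cast at h2 h3
    rw [hη.2.2.1] at h1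
    have h6 : 0 < β ^ (j + 1) * (1 - betaVal β (sh (k + 1) a)) := mul_pos (by positivity) (by linarith)
    rw [pow_succ] at h6
    nlinarith

theorem lt_of_L {β : ℝ} (hβ : 1 < β) {η : ℕ → ℕ} (hη : QuasiGreedy β η)
    (m : ℕ) {a : ℕ → ℕ} (ha : B a) (hL : ∀ k, a k = 0 → L η m (sh (k + 1) a)) :
    ∀ k, a k = 0 → betaVal β (sh (k + 1) a) < 1 := by
  have h0 : (0 : ℝ) < β := by linarith
  have hb : 0 < β - 1 := by linarith
  -- recursion
  have hrec : ∀ k, a k = 0 → ∃ j k', a k' = 0 ∧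
      1 - betaVal β (sh (k' + 1) a) < β ^ (j + 1) * (1 - betaVal β (sh (k + 1) a)) := by
    intro k hk
    obtain ⟨j, hj, h1, h2⟩ := hL k hk
    have hB := B_sh ha (k + 1)
    have e2 : η j = 1 := by have := hη.1 j; omega
    have e1 : sh (k + 1) a j = 0 := by omega
    refine ⟨j, k + 1 + j, e1, ?_⟩
    have d1 := v_diff hβ hB hη.1 j h1
    have d2 := v_step' hβ hB j
    have d3 := v_step' hβ hη.1 j
    have d4 := Q_pos hβ hη (j + 1)
    rw [e1] at d2; rw [e2] at d3; push_cast at d2 d3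
    rw [hη.2.2.1] at d1
    rw [sh_sh] at d2
    rw [show k + 1 + j + 1 = k + 1 + (j + 1) by ring]
    have : β ^ (j + 1) * (1 - betaVal β (sh (k + 1) a)) =
        1 + betaVal β (sh (j + 1) η) - betaVal β (sh (k + 1 + (j + 1)) a) := by
      rw [sh_sh] at d1
      rw [sh_sh] at d2
      rw [pow_succ]
      linear_combination (-β) * d1 - d2 + d3
    linarith
  have hN : ∀ N k, a k = 0 → -(1 / (β - 1)) ≤ β ^ N * (1 - betaVal β (sh (k + 1) a)) := by
    intro N
    induction N with
    | zero =>
      intro k hk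
      have := v_le hβ (B_sh ha (k + 1))
      simp only [pow_zero, one_mul]; linarith
    | succ N ih =>
      intro k hk
      by_cases hpos : 0 ≤ 1 - betaVal β (sh (k + 1) a)
      · have h1 : 0 ≤ β ^ (N + 1) * (1 - betaVal β (sh (k + 1) a)) := by positivity
        have h2 : 0 < 1 / (β - 1) := by positivity
        linarith
      · push Not at hpos
        obtain ⟨j, k', hk', hlt⟩ := hrec k hk
        have h1 := ih k' hk'
        have h2 : β ≤ β ^ (j + 1) := le_self_pow₀ hβ.le (by omega)
        have h3 : β ^ (j + 1) * (1 - betaVal β (sh (k + 1) a)) ≤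
            β * (1 - betaVal β (sh (k + 1) a)) := mul_le_mul_of_nonpos_right h2 hpos.le
        have h4 : β ^ N * (1 - betaVal β (sh (k' + 1) a)) ≤
            β ^ N * (β * (1 - betaVal β (sh (k + 1) a))) :=
          mul_le_mul_of_nonneg_left (by linarith) (by positivity)
        rw [pow_succ, mul_assoc]; linarith
  have hnn : ∀ k, a k = 0 → 0 ≤ 1 - betaVal β (sh (k + 1) a) := by
    intro k hk
    by_contra hc
    push Not at hc
    have hpos : 0 < -(1 - betaVal β (sh (k + 1) a)) := by linarith
    obtain ⟨n, hn⟩ := pow_unbounded_of_one_lt ((1 / (β - 1)) / -(1 - betaVal β (sh (k + 1) a))) hβ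
    rw [div_lt_iff₀ hpos] at hn
    have := hN n k hk
    linarith
  intro k hk
  obtain ⟨j, k', hk', hlt⟩ := hrec k hk
  have h1 := hnn k' hk'
  have h2 : 0 < β ^ (j + 1) * (1 - betaVal β (sh (k + 1) a)) := by linarith
  have h3 := (mul_pos_iff_of_pos_left (by positivity : (0:ℝ) < β ^ (j + 1))).mp h2
  linarith

/-- Local conditions define an SFT. -/
theorem sft_of_local (m : ℕ) (P : (ℕ → ℕ) → Prop)
    (hP : ∀ x y : ℕ → ℕ, (∀ i < m, x i = y i) → P x → P y) :
    IsSFT01 {x | (∀ n, x n ≤ 1) ∧ ∀ n, P (sh n x)} := by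
  refine ⟨{w | w.length = m ∧ (∀ d ∈ w, d ∈ ({0, 1} : Finset ℕ)) ∧ ¬ P (fun i => w.getD i 0)}, ?_, ?_⟩
  · have hfin : (({0, 1} : Finset ℕ) : Set ℕ).Finite := Finset.finite_toSet _
    refine Set.Finite.subset (s := Set.range (fun f : Fin m → Fin 2 => List.ofFn (fun i => (f i : ℕ)))) (Set.finite_range _) ?_
    rintro w ⟨hw, hd, -⟩
    subst hw
    refine ⟨fun i => ⟨w.get i, ?_⟩, ?_⟩
    · have := hd _ (List.get_mem w i)
      simp only [Finset.mem_insert, Finset.mem_singleton] at this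
      omega
    · simp
  · ext x
    simp only [Set.mem_setOf_eq]
    refine and_congr_right (fun hx => ⟨?_, ?_⟩)
    · rintro h w ⟨hw, -, hnP⟩ n hocc
      apply hnP
      refine hP _ _ ?_ (h n)
      intro i hi
      have := hocc ⟨i, by omega⟩
      simp only [sh]
      rw [this]
      simp [List.getD_eq_getElem?_getD, hw, hi]
    · intro h n
      by_contra hnP
      refine h (List.ofFn (fun i : Fin m => x (n + i))) ⟨by simp, ?_, ?_⟩ n ?_
      · intro d hd
        rw [List.mem_ofFn] at hd
        obtain ⟨i, rfl⟩ := hd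
        have := hx (n + i)
        simp only [Finset.mem_insert, Finset.mem_singleton]; omega
      · intro hc
        apply hnP
        refine hP _ _ ?_ hc
        intro i hi
        simp [List.getD_eq_getElem?_getD, hi, sh]
      · intro i
        simp

theorem backward {β : ℝ} (hβ : 1 < β) (hβ2 : β < 2) {η : ℕ → ℕ} (hη : QuasiGreedy β η)
    (n : ℕ) (hn : η n = 1) (hQ : betaVal β (sh (n + 1) η) ≤ 1 / (β - 1) - 1) :
    IsSFT01 (UTilde β) := by
  let P : (ℕ → ℕ) → Prop := fun x =>
    (x 0 = 0 → L η (n + 1) (sh 1 x)) ∧ (x 0 = 1 → L η (n + 1) (cj (sh 1 x)))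
  have hP : ∀ x y : ℕ → ℕ, (∀ i < n + 2, x i = y i) → P x → P y := by
    rintro x y h ⟨h1, h2⟩
    have h0 := h 0 (by omega)
    refine ⟨fun e => L_congr ?_ (h1 (by omega)), fun e => L_congr ?_ (h2 (by omega))⟩
    · intro i hi
      exact h (1 + i) (by omega)
    · intro i hi
      simp only [cj, sh]
      rw [h (1 + i) (by omega)]
  have key : UTilde β = {x | (∀ k, x k ≤ 1) ∧ ∀ k, P (sh k x)} := by
    ext a
    rw [mem_U hβ hβ2]
    refine and_congr_right (fun ha => ⟨fun hC k => ⟨fun e => ?_, fun e => ?_⟩, fun h => ?_⟩)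
    · rw [sh_sh]
      exact L_of_C hβ hβ2 hη n hn hQ ha hC k e
    · rw [sh_sh, ← sh_cj]
      refine L_of_C hβ hβ2 hη n hn hQ (B_cj a) (C_cj hβ ha hC) k ?_
      have e' : a k = 1 := e
      simp [cj, e']
    · have h1 := lt_of_L hβ hη (n + 1) ha (fun k e => by
        have := (h k).1 e
        rwa [sh_sh] at this)
      have h2 := lt_of_L hβ hη (n + 1) (B_cj a) (fun k e => by
        have hk := ha k
        have := (h k).2 (by simp only [cj] at e; simp only [sh]; simp; omega)
        rwa [sh_sh] at this)
      intro k
      refine ⟨h1 k, fun e => ?_⟩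
      have := h2 k (by simp [cj, e])
      rw [sh_cj, v_cj hβ (B_sh ha _)] at this
      linarith
  rw [key]
  exact sft_of_local (n + 2) P hP

theorem cont_v {β : ℝ} (hβ : 1 < β) : ContinuousOn (betaVal β) {a | B a} := by
  have h0 : (0 : ℝ) < β := by linarith
  unfold betaVal
  refine continuousOn_tsum (u := fun n => 1 / β ^ (n + 1)) (fun n => ?_) (hasSum_geo hβ).summable ?_
  · have h1 : Continuous (fun a : ℕ → ℕ => ((a n : ℕ) : ℝ)) :=
      continuous_of_discreteTopology.comp (continuous_apply n)
    exact (h1.div_const _).continuousOn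
  · intro n a ha
    rw [Real.norm_of_nonneg (by positivity)]
    exact term_le hβ ha n

theorem compact_B : IsCompact {a : ℕ → ℕ | B a} := by
  have h := isCompact_univ_pi (X := fun _ : ℕ => ℕ) (s := fun _ => Set.Iic 1)
    (fun _ => (Set.finite_Iic 1).isCompact)
  convert h using 1
  ext a; simp [B, Pi.le_def]

theorem closed_SFT {Y : Set (ℕ → ℕ)} (h : IsSFT01 Y) : IsClosed Y := by
  obtain ⟨F, -, rfl⟩ := h
  have hev : ∀ k (s : Set ℕ), IsOpen {x : ℕ → ℕ | x k ∈ s} := fun k s =>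
    (isOpen_discrete s).preimage (continuous_apply k)
  have hev2 : ∀ k (s : Set ℕ), IsClosed {x : ℕ → ℕ | x k ∈ s} := fun k s =>
    (isClosed_discrete s).preimage (continuous_apply k)
  have e : {x : ℕ → ℕ | (∀ n, x n ≤ 1) ∧ ∀ w ∈ F, ∀ n, ¬ OccursAt w x n} =
      (⋂ n, {x | x n ∈ Set.Iic 1}) ∩ ⋂ w ∈ F, ⋂ n, {x | OccursAt w x n}ᶜ := by
    ext x; simp
  rw [e]
  refine (isClosed_iInter fun n => hev2 n _).inter
    (isClosed_iInter fun w => isClosed_iInter fun _ => isClosed_iInter fun n => ?_)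
  rw [isClosed_compl_iff]
  have e2 : {x | OccursAt w x n} = ⋂ i : Fin w.length, {x | x (n + i.1) ∈ ({w.get i} : Set ℕ)} := by
    ext x; simp [OccursAt]
  rw [e2]
  exact isOpen_iInter_of_finite fun i => hev _ _

/-- Given a unique expansion with value below 1, find a larger one. -/
theorem improve {β : ℝ} (hβ : 1 < β) (hβ2 : β < 2) {η : ℕ → ℕ} (hη : QuasiGreedy β η)
    (hno : ∀ n, η n = 1 → 1 / (β - 1) - 1 < betaVal β (sh (n + 1) η))
    {a : ℕ → ℕ} (ha : B a) (hC : C β a) (hlt : betaVal β a < 1) :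
    ∃ z, B z ∧ C β z ∧ betaVal β a < betaVal β z ∧ betaVal β z < 1 := by
  have h0 : (0 : ℝ) < β := by linarith
  have hb : 0 < β - 1 := by linarith
  have hR : 1 < 1 / (β - 1) := by rw [lt_div_iff₀ hb]; linarith
  have hne : a ≠ η := by
    rintro rfl; rw [hη.2.2.1] at hlt; exact lt_irrefl _ hlt
  obtain ⟨j, hj1, hj2⟩ := first_diff hne
  have haj := ha j
  have hηj := hη.1 j
  have hcase : a j = 0 ∧ η j = 1 := by
    by_contra hc
    have e1 : a j = 1 := by omega
    have e2 : η j = 0 := by omega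
    have h1 := v_diff hβ ha hη.1 j hj1
    have h2 := v_step' hβ ha j
    have h3 := v_step' hβ hη.1 j
    have h4 := Q_le_one hβ hβ2 hη (j + 1)
    have h5 := v_nonneg hβ (sh (j + 1) a)
    rw [e1] at h2; rw [e2] at h3; push_cast at h2 h3
    rw [hη.2.2.1] at h1
    have h6 : 0 < β ^ (j + 1) * (1 - betaVal β a) := mul_pos (by positivity) (by linarith)
    rw [pow_succ] at h6
    nlinarith
  obtain ⟨e1, e2⟩ := hcase
  let z : ℕ → ℕ := fun i => if (i / (j + 1)) % 2 = 0 then η (i % (j + 1)) else 1 - η (i % (j + 1))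
  have hz : B z := by
    intro i
    have := hη.1 (i % (j + 1))
    simp only [z]; split_ifs <;> omega
  have hzs : ∀ i < j + 1, z i = η i := by
    intro i hi
    simp [z, Nat.div_eq_of_lt hi, Nat.mod_eq_of_lt hi]
  have hzc : sh (j + 1) z = cj z := by
    funext i
    have h1 := hη.1 (i % (j + 1))
    simp only [sh, cj, z]
    rw [Nat.add_mod_left, Nat.add_div_left _ (by omega : 0 < j + 1)]
    split_ifs <;> omega
  have hzj : z j = 1 := by rw [hzs j (by omega), e2]
  -- value below one
  have hx1 : betaVal β z < 1 := by
    have h1 := v_diff hβ hz hη.1 (j + 1) hzs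
    rw [hzc, v_cj hβ hz, hη.2.2.1] at h1
    have h2 := hno j e2
    by_contra hc
    push Not at hc
    have h3 : 0 ≤ β ^ (j + 1) * (betaVal β z - 1) := mul_nonneg (by positivity) (by linarith)
    linarith
  have hza : ∀ i < j, z i = a i := fun i hi => by rw [hzs i (by omega), hj1 i hi]
  have hxp : betaVal β a < betaVal β z := by
    have h1 := v_diff hβ hz ha j hza
    have h2 := v_step' hβ hz j
    have h3 := v_step' hβ ha j
    have h4 := (hC j).1 e1
    rw [hzj, hzc, v_cj hβ hz] at h2; rw [e1] at h3; push_cast at h2 h3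
    by_contra hc
    push Not at hc
    have h6 : β ^ (j + 1) * (betaVal β z - betaVal β a) ≤ 0 :=
      mul_nonpos_of_nonneg_of_nonpos (by positivity) (by linarith)
    rw [pow_succ] at h6
    nlinarith
  refine ⟨z, hz, ?_, hxp, hx1⟩
  intro n
  induction n using Nat.strong_induction_on with
  | _ n ih =>
    rcases lt_trichotomy n j with hn | hn | hn
    · have h1 := v_diff hβ hz hη.1 (n + 1) (fun i hi => hzs i (by omega))
      have h2 := v_diff hβ hz ha (n + 1) (fun i hi => hza i (by omega))
      rw [hη.2.2.1] at h1
      have hp : 0 < β ^ (n + 1) := by positivity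
      refine ⟨fun _ => ?_, fun e => ?_⟩
      · have h3 := Q_le_one hβ hβ2 hη (n + 1)
        have h4 := mul_pos hp (by linarith : 0 < 1 - betaVal β z)
        linarith
      · have h3 := (hC n).2 (by rw [← hza n hn, e])
        have h4 := mul_pos hp (by linarith : 0 < betaVal β z - betaVal β a)
        linarith
    · subst hn
      rw [hzc, v_cj hβ hz]
      refine ⟨fun e => by omega, fun _ => by linarith⟩
    · obtain ⟨k, rfl⟩ : ∃ k, n = j + 1 + k := ⟨n - (j + 1), by omega⟩
      have h1 := ih k (by omega)
      have h2 : z (j + 1 + k) = 1 - z k := congrFun hzc k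
      have h3 : sh (j + 1 + k + 1) z = cj (sh (k + 1) z) := by
        rw [← sh_cj, ← hzc, sh_sh, add_assoc]
      have h4 := hz k
      rw [h2, h3, v_cj hβ (B_sh hz _)]
      refine ⟨fun e => ?_, fun e => ?_⟩
      · have := h1.2 (by omega)
        linarith
      · have := h1.1 (by omega)
        linarith

/-- Prepend a zero. -/
def zc (a : ℕ → ℕ) : ℕ → ℕ := fun n => if n = 0 then 0 else a (n - 1)

theorem sh_zc (a : ℕ → ℕ) (n : ℕ) : sh (n + 1) (zc a) = sh n a := by
  funext k
  simp only [sh, zc]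
  rw [if_neg (by omega)]
  congr 1; omega

theorem forward {β : ℝ} (hβ : 1 < β) (hβ2 : β < 2) {η : ℕ → ℕ} (hη : QuasiGreedy β η)
    (hno : ∀ n, η n = 1 → 1 / (β - 1) - 1 < betaVal β (sh (n + 1) η)) :
    ¬ IsSFT01 (UTilde β) := by
  intro hS
  have h0 : (0 : ℝ) < β := by linarith
  have hcl := closed_SFT hS
  have hz0 : IsClosed {x : ℕ → ℕ | x 0 = 0} :=
    isClosed_eq (continuous_apply 0) continuous_const
  have hK : IsCompact ({a : ℕ → ℕ | B a} ∩ (UTilde β ∩ {x | x 0 = 0})) :=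
    compact_B.inter_right (hcl.inter hz0)
  have hne : ({a : ℕ → ℕ | B a} ∩ (UTilde β ∩ {x | x 0 = 0})).Nonempty := by
    refine ⟨fun _ => 0, fun _ => by simp, (mem_U hβ hβ2 _).2 ⟨fun _ => by simp, fun n => ⟨fun _ => ?_, fun e => ?_⟩⟩, rfl⟩
    · simp [sh, betaVal]
    · simp at e
  obtain ⟨a, ⟨ha, haU, ha0⟩, hmax⟩ := hK.exists_isMaxOn hne ((cont_v hβ).mono Set.inter_subset_left)
  have haB : B a := ha
  have hC := ((mem_U hβ hβ2 a).1 haU).2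
  have hC1 : C β (sh 1 a) := by
    intro n
    have := hC (1 + n)
    rw [sh_sh, ← add_assoc]
    exact this
  have hlt : betaVal β (sh 1 a) < 1 := (hC 0).1 ha0
  obtain ⟨z, hzB, hzC, hz1, hz2⟩ := improve hβ hβ2 hη hno (B_sh haB 1) hC1 hlt
  have hwB : B (zc z) := by
    intro n; simp only [zc]; split_ifs
    · simp
    · exact hzB _
  have hwC : C β (zc z) := by
    intro n
    rw [sh_zc]
    cases n with
    | zero => rw [sh_zero]; exact ⟨fun _ => hz2, fun e => by simp [zc] at e⟩
    | succ n => exact hzC n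
  have hw : zc z ∈ {a : ℕ → ℕ | B a} ∩ (UTilde β ∩ {x | x 0 = 0}) :=
    ⟨hwB, (mem_U hβ hβ2 _).2 ⟨hwB, hwC⟩, rfl⟩
  have hle : betaVal β (zc z) ≤ betaVal β a := hmax hw
  have s1 := v_step hβ hwB
  have s2 := v_step hβ haB
  have ha0' : a 0 = 0 := ha0
  have e := sh_zc z 0
  rw [zero_add, sh_zero] at e
  rw [e, show zc z 0 = 0 from rfl] at s1
  rw [ha0'] at s2
  push_cast at s1 s2
  nlinarith

end BetaU

open BetaU in
/-- `Ũ_β` is a subshift of finite type iff the quasi-greedy orbit of `1`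
falls into `(1/β, 1/(β(β-1))]`. -/
theorem statement4 (β : ℝ) (hβ : β ∈ Set.Ioo (1 : ℝ) 2)
    (η : ℕ → ℕ) (hη : QuasiGreedy β η)
    (Q : ℕ → ℝ) (hQ : ∀ n, Q n = betaVal β (fun k => η (n + k))) :
    IsSFT01 (UTilde β) ↔
      ∃ n ≥ 1, Q n ∈ Set.Ioc (1 / β) (1 / (β * (β - 1))) := by
  obtain ⟨hβ1, hβ2⟩ := hβ
  have h0 : (0 : ℝ) < β := by linarith
  have hb : 0 < β - 1 := by linarith
  have hQ' : ∀ n, Q n = betaVal β (sh n η) := hQ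
  have hst : ∀ n, β * Q n = η n + Q (n + 1) := fun n => by
    rw [hQ', hQ']; exact v_step' hβ1 hη.1 n
  have hle : ∀ n, Q n ≤ 1 := fun n => by rw [hQ']; exact Q_le_one hβ1 hβ2 hη n
  have hpos : ∀ n, 0 < Q n := fun n => by rw [hQ']; exact Q_pos hβ1 hη n
  have hlow : ∀ n, 1 / β < Q n ↔ 1 < β * Q n := fun n => by rw [div_lt_iff₀ h0, mul_comm]
  have hup : ∀ n, Q n ≤ 1 / (β * (β - 1)) ↔ β * Q n ≤ 1 / (β - 1) := fun n => by
    rw [le_div_iff₀ (by positivity), le_div_iff₀ hb]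
    constructor <;> intro h <;> linarith
  have hone : ∀ n, η n = 1 → 1 / β < Q n := fun n h => by
    rw [hlow, hst, h]; have := hpos (n + 1); push_cast; linarith
  constructor
  · intro hS
    by_contra hc
    push Not at hc
    refine forward hβ1 hβ2 hη ?_ hS
    intro n hn
    rw [← hQ']
    have h1 := hst n
    rw [hn] at h1; push_cast at h1
    by_contra hcon
    push Not at hcon
    have hmem : Q n ∈ Set.Ioc (1 / β) (1 / (β * (β - 1))) :=
      ⟨hone n hn, (hup n).2 (by linarith)⟩
    rcases Nat.eq_zero_or_pos n with rfl | hp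
    · obtain ⟨k, hk, hk1⟩ := hη.2.1 1
      refine hc k hk ⟨hone k hk1, (hle k).trans ?_⟩
      have : Q 0 = 1 := by rw [hQ', sh_zero]; exact hη.2.2.1
      have h5 := hmem.2
      rwa [this] at h5
    · exact hc n hp hmem
  · rintro ⟨n, -, h1, h2⟩
    rw [hlow] at h1
    rw [hup] at h2
    have hn : η n = 1 := by
      by_contra hne
      have : η n = 0 := by have := hη.1 n; omega
      have h3 := hst n
      rw [this] at h3; push_cast at h3
      have := hle (n + 1)
      linarith
    refine backward hβ1 hβ2 hη n hn ?_
    have h3 := hst n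
    rw [hn] at h3; push_cast at h3
    rw [← hQ']; linarith
end

section
/- The set of unique expansions Ũ_β is a subshift of finite type if and only if Ũ_β is a sofic shift. -/
/-- The left shift on sequences. -/
def shiftSeq (x : ℕ → ℕ) : ℕ → ℕ := fun n => x (n + 1)

/-- `X` is a subshift of finite type over the finite alphabet `{0, …, N-1}`. -/
def IsSFTAlph (N : ℕ) (X : Set (ℕ → ℕ)) : Prop :=
  ∃ F : Set (List ℕ), F.Finite ∧
    X = {x | (∀ n, x n < N) ∧ ∀ w ∈ F, ∀ n, ¬ OccursAt w x n}

/-- `Y ⊆ {0,1}^ℕ` is a sofic shift: it is the image of a subshift of finite type over a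
finite alphabet under a continuous shift-commuting surjection. -/
def IsSofic01 (Y : Set (ℕ → ℕ)) : Prop :=
  ∃ (N : ℕ) (X : Set (ℕ → ℕ)) (φ : (ℕ → ℕ) → ℕ → ℕ),
    IsSFTAlph N X ∧ ContinuousOn φ X ∧ φ '' X = Y ∧
    ∀ x ∈ X, φ (shiftSeq x) = shiftSeq (φ x)

lemma bv_summable {β : ℝ} (hβ : β ∈ Set.Ioo (1 : ℝ) 2) {a : ℕ → ℕ} (ha : ∀ n, a n ≤ 1) :
    Summable (fun n : ℕ => (a n : ℝ) / β ^ (n + 1)) := by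
  have h1 : (0 : ℝ) < β := by linarith [hβ.1]
  have hs : Summable (fun n : ℕ => (β⁻¹) ^ (n + 1)) :=
    (summable_nat_add_iff 1).2 (summable_geometric_of_lt_one (by positivity) (inv_lt_one_of_one_lt₀ hβ.1))
  refine Summable.of_nonneg_of_le (fun n => by positivity) (fun n => ?_) hs
  have : (a n : ℝ) ≤ 1 := by exact_mod_cast ha n
  rw [inv_pow, div_eq_mul_inv]
  exact mul_le_of_le_one_left (by positivity) this

lemma bv_succ {β : ℝ} (hβ : β ∈ Set.Ioo (1 : ℝ) 2) {a : ℕ → ℕ} (ha : ∀ n, a n ≤ 1) :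
    betaVal β a = (a 0 + betaVal β (shiftSeq a)) / β := by
  have h1 : (0 : ℝ) < β := by linarith [hβ.1]
  unfold betaVal
  rw [(bv_summable hβ ha).tsum_eq_zero_add, add_div, ← tsum_div_const]
  congr 1
  · simp
  · apply tsum_congr
    intro n
    simp only [shiftSeq]
    rw [pow_succ β (n + 1), div_div]

lemma bv_nonneg {β : ℝ} (hβ : β ∈ Set.Ioo (1 : ℝ) 2) (a : ℕ → ℕ) : 0 ≤ betaVal β a := by
  have h1 : (0 : ℝ) < β := by linarith [hβ.1]
  exact tsum_nonneg (fun n => by positivity)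

lemma bv_le {β : ℝ} (hβ : β ∈ Set.Ioo (1 : ℝ) 2) {a : ℕ → ℕ} (ha : ∀ n, a n ≤ 1) :
    betaVal β a ≤ 1 / (β - 1) := by
  have h1 : (0 : ℝ) < β := by linarith [hβ.1]
  have h2 : (0 : ℝ) < β - 1 := by linarith [hβ.1]
  have hone : betaVal β (fun _ => 1) = 1 / (β - 1) := by
    have := bv_succ hβ (a := fun _ => 1) (fun _ => le_rfl)
    have h3 : shiftSeq (fun _ => 1) = fun _ => 1 := rfl
    rw [h3] at this
    field_simp at this ⊢
    push_cast at this
    linarith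
  rw [← hone]
  refine Summable.tsum_le_tsum (fun n => ?_) (bv_summable hβ ha) (bv_summable hβ (fun _ => le_rfl))
  have : (a n : ℝ) ≤ 1 := by exact_mod_cast ha n
  push_cast
  gcongr

lemma bv_close {β : ℝ} (hβ : β ∈ Set.Ioo (1 : ℝ) 2) (m : ℕ) : ∀ {a b : ℕ → ℕ},
    (∀ n, a n ≤ 1) → (∀ n, b n ≤ 1) → (∀ i < m, a i = b i) →
    |betaVal β a - betaVal β b| ≤ (β⁻¹) ^ m * (1 / (β - 1)) := by
  have h1 : (0 : ℝ) < β := by linarith [hβ.1]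
  induction m with
  | zero =>
    intro a b ha hb _
    have := bv_le hβ ha
    have := bv_le hβ hb
    have := bv_nonneg hβ a
    have := bv_nonneg hβ b
    rw [pow_zero, one_mul, abs_le]
    constructor <;> linarith
  | succ m ih =>
    intro a b ha hb hab
    have h := ih (a := shiftSeq a) (b := shiftSeq b) (fun n => ha _) (fun n => hb _)
      (fun i hi => hab (i + 1) (by omega))
    rw [bv_succ hβ ha, bv_succ hβ hb, hab 0 (by omega)]
    have : ((b 0 : ℝ) + betaVal β (shiftSeq a)) / β - (b 0 + betaVal β (shiftSeq b)) / β
        = β⁻¹ * (betaVal β (shiftSeq a) - betaVal β (shiftSeq b)) := by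
      field_simp; ring
    rw [this, abs_mul, abs_of_pos (inv_pos.2 h1), pow_succ', mul_assoc]
    gcongr

/-- Orbit of the greedy algorithm. -/
noncomputable def grOrb (β x : ℝ) : ℕ → ℝ
  | 0 => x
  | n + 1 => β * grOrb β x n - (if 1 ≤ β * grOrb β x n then 1 else 0)

lemma exists_exp {β : ℝ} (hβ : β ∈ Set.Ioo (1 : ℝ) 2) {x : ℝ} (h0 : 0 ≤ x)
    (hx : x ≤ 1 / (β - 1)) : ∃ a : ℕ → ℕ, (∀ n, a n ≤ 1) ∧ betaVal β a = x := by
  have h1 : (0 : ℝ) < β := by linarith [hβ.1]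
  have h2 : (0 : ℝ) < β - 1 := by linarith [hβ.1]
  have hb : ∀ n, 0 ≤ grOrb β x n ∧ grOrb β x n ≤ 1 / (β - 1) := by
    intro n
    induction n with
    | zero => exact ⟨h0, hx⟩
    | succ n ih =>
      obtain ⟨ha, hb⟩ := ih
      rw [le_div_iff₀ h2] at hb
      simp only [grOrb]
      rw [le_div_iff₀ h2]
      split_ifs with h
      · exact ⟨by linarith, by nlinarith⟩
      · push Not at h
        have := mul_nonneg h1.le ha
        refine ⟨by linarith, ?_⟩
        nlinarith [hβ.2]
  let a : ℕ → ℕ := fun n => if 1 ≤ β * grOrb β x n then 1 else 0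
  have ha : ∀ n, a n ≤ 1 := fun n => by simp only [a]; split_ifs <;> simp
  refine ⟨a, ha, ?_⟩
  have hpart : ∀ n, ∑ i ∈ Finset.range n, (a i : ℝ) / β ^ (i + 1) = x - grOrb β x n / β ^ n := by
    intro n
    induction n with
    | zero => simp [grOrb]
    | succ n ih =>
      rw [Finset.sum_range_succ, ih]
      have : grOrb β x (n + 1) = β * grOrb β x n - a n := by
        simp only [grOrb, a]; push_cast; rfl
      rw [this]
      field_simp
      ring
  have ht := (bv_summable hβ ha).hasSum.tendsto_sum_nat
  have ht2 : Filter.Tendsto (fun n => x - grOrb β x n / β ^ n) Filter.atTop (nhds (x - 0)) := by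
    refine tendsto_const_nhds.sub ?_
    have hz : Filter.Tendsto (fun n : ℕ => (1 / (β - 1)) * (β⁻¹) ^ n) Filter.atTop (nhds 0) := by
      have := (tendsto_pow_atTop_nhds_zero_of_lt_one (r := β⁻¹) (by positivity)
        (inv_lt_one_of_one_lt₀ hβ.1)).const_mul (1 / (β - 1))
      simpa using this
    refine squeeze_zero (fun n => div_nonneg (hb n).1 (by positivity)) (fun n => ?_) hz
    rw [inv_pow, div_eq_mul_inv]
    exact mul_le_mul_of_nonneg_right (hb n).2 (by positivity)
  simp only [hpart] at ht
  rw [sub_zero] at ht2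
  exact tendsto_nhds_unique ht ht2

/-- Prepend a digit. -/
def consSeq (d : ℕ) (a : ℕ → ℕ) : ℕ → ℕ
  | 0 => d
  | n + 1 => a n

lemma cons_le {d : ℕ} {a : ℕ → ℕ} (hd : d ≤ 1) (ha : ∀ n, a n ≤ 1) : ∀ n, consSeq d a n ≤ 1
  | 0 => hd
  | n + 1 => ha n

lemma bv_cons {β : ℝ} (hβ : β ∈ Set.Ioo (1 : ℝ) 2) {d : ℕ} {a : ℕ → ℕ} (hd : d ≤ 1)
    (ha : ∀ n, a n ≤ 1) : betaVal β (consSeq d a) = (d + betaVal β a) / β :=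
  bv_succ hβ (cons_le hd ha)

lemma U_shift {β : ℝ} (hβ : β ∈ Set.Ioo (1 : ℝ) 2) {a : ℕ → ℕ} (ha : a ∈ UTilde β) :
    shiftSeq a ∈ UTilde β := by
  refine ⟨fun n => ha.1 _, fun b hb h => ?_⟩
  have := ha.2 (consSeq (a 0) b) (cons_le (ha.1 0) hb)
    (by rw [bv_cons hβ (ha.1 0) hb, bv_succ hβ ha.1, h])
  funext n
  exact congrFun this (n + 1)

lemma U_shift_n {β : ℝ} (hβ : β ∈ Set.Ioo (1 : ℝ) 2) (n : ℕ) : ∀ {a : ℕ → ℕ}, a ∈ UTilde β →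
    (fun k => a (n + k)) ∈ UTilde β := by
  induction n with
  | zero => intro a ha; simpa using ha
  | succ n ih =>
    intro a ha
    have := ih (U_shift hβ ha)
    have he : (fun k => a (n + 1 + k)) = fun k => shiftSeq a (n + k) := by
      funext k; simp only [shiftSeq]; congr 1; omega
    rw [he]; exact this

lemma U_switch {β : ℝ} (hβ : β ∈ Set.Ioo (1 : ℝ) 2) {a : ℕ → ℕ} (ha : a ∈ UTilde β) :
    betaVal β a ∉ Set.Icc (1 / β) (1 / (β - 1) / β) := by
  have h1 : (0 : ℝ) < β := by linarith [hβ.1]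
  rintro ⟨hl, hu⟩
  rw [div_le_iff₀ h1] at hl
  rw [le_div_iff₀ h1] at hu
  have hv := bv_le hβ ha.1
  have h01 : a 0 = 0 ∨ a 0 = 1 := by have := ha.1 0; omega
  rcases h01 with h | h
  · have h2 : (0 : ℝ) < β - 1 := by linarith [hβ.1]
    obtain ⟨b, hb, hbv⟩ := exists_exp hβ (x := betaVal β a * β - 1) (by linarith) (by linarith)
    have := ha.2 (consSeq 1 b) (cons_le le_rfl hb)
      (by rw [bv_cons hβ le_rfl hb, hbv]; field_simp; push_cast; ring)
    have := congrFun this 0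
    simp [consSeq, h] at this
  · obtain ⟨b, hb, hbv⟩ := exists_exp hβ (x := betaVal β a * β) (by linarith) hu
    have := ha.2 (consSeq 0 b) (cons_le zero_le_one hb)
      (by rw [bv_cons hβ zero_le_one hb, hbv]; field_simp; push_cast; ring)
    have := congrFun this 0
    simp [consSeq, h] at this

lemma U_of_switch {β : ℝ} (hβ : β ∈ Set.Ioo (1 : ℝ) 2) {a : ℕ → ℕ} (ha : ∀ n, a n ≤ 1)
    (hs : ∀ n, betaVal β (fun k => a (n + k)) ∉ Set.Icc (1 / β) (1 / (β - 1) / β)) :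
    a ∈ UTilde β := by
  have h1 : (0 : ℝ) < β := by linarith [hβ.1]
  refine ⟨ha, fun b hb hab => ?_⟩
  funext n
  induction n generalizing a b with
  | zero =>
    by_contra hne
    have h0 := hs 0
    simp only [zero_add] at h0
    apply h0
    have hA := bv_succ hβ ha
    have hB := bv_succ hβ hb
    have a0 := bv_nonneg hβ (shiftSeq a)
    have b0 := bv_nonneg hβ (shiftSeq b)
    have a1 := bv_le hβ (a := shiftSeq a) (fun n => ha _)
    have b1 := bv_le hβ (a := shiftSeq b) (fun n => hb _)
    have := ha 0
    have := hb 0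
    have hc : (a 0 = 0 ∧ b 0 = 1) ∨ (a 0 = 1 ∧ b 0 = 0) := by omega
    rcases hc with ⟨h, h'⟩ | ⟨h, h'⟩
    · rw [h] at hA
      rw [h'] at hB
      constructor
      · rw [← hab, hB]; push_cast; gcongr; linarith
      · rw [hA]; push_cast; gcongr; linarith
    · rw [h] at hA
      rw [h'] at hB
      constructor
      · rw [hA]; push_cast; gcongr; linarith
      · rw [← hab, hB]; push_cast; gcongr; linarith
  | succ n ih =>
    have h0 : b 0 = a 0 := by
      by_contra hne
      have h0 := hs 0
      simp only [zero_add] at h0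
      apply h0
      have hA := bv_succ hβ ha
      have hB := bv_succ hβ hb
      have a0 := bv_nonneg hβ (shiftSeq a)
      have b0 := bv_nonneg hβ (shiftSeq b)
      have a1 := bv_le hβ (a := shiftSeq a) (fun n => ha _)
      have b1 := bv_le hβ (a := shiftSeq b) (fun n => hb _)
      have := ha 0
      have := hb 0
      have hc : (a 0 = 0 ∧ b 0 = 1) ∨ (a 0 = 1 ∧ b 0 = 0) := by omega
      rcases hc with ⟨h, h'⟩ | ⟨h, h'⟩
      · rw [h] at hA
        rw [h'] at hB
        constructor
        · rw [← hab, hB]; push_cast; gcongr; linarith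
        · rw [hA]; push_cast; gcongr; linarith
      · rw [h] at hA
        rw [h'] at hB
        constructor
        · rw [hA]; push_cast; gcongr; linarith
        · rw [← hab, hB]; push_cast; gcongr; linarith
    refine ih (a := shiftSeq a) (fun n => ha _) (fun m => ?_) (shiftSeq b) (fun n => hb _) ?_
    · have := hs (m + 1)
      have he : (fun k => a (m + 1 + k)) = fun k => shiftSeq a (m + k) := by
        funext k; simp only [shiftSeq]; congr 1; omega
      rwa [he] at this
    · rw [bv_succ hβ ha, bv_succ hβ hb, h0] at hab
      have := (div_left_inj' h1.ne').1 hab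
      linarith

lemma sft_compact {N : ℕ} {X : Set (ℕ → ℕ)} (h : IsSFTAlph N X) : IsCompact X := by
  obtain ⟨F, -, rfl⟩ := h
  have hK : IsCompact (Set.pi Set.univ (fun _ : ℕ => Set.Iio N)) :=
    isCompact_univ_pi (fun _ => (Set.finite_Iio N).isCompact)
  refine hK.of_isClosed_subset ?_ (fun x hx n _ => hx.1 n)
  have : {x : ℕ → ℕ | (∀ n, x n < N) ∧ ∀ w ∈ F, ∀ n, ¬ OccursAt w x n} =
      (⋂ n, (fun x : ℕ → ℕ => x n) ⁻¹' Set.Iio N) ∩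
      ⋂ w ∈ F, ⋂ n, (⋂ i : Fin w.length, (fun x : ℕ → ℕ => x (n + i.1)) ⁻¹' {w.get i})ᶜ := by
    ext x
    simp [OccursAt]
  rw [this]
  refine (isClosed_iInter fun n => (isClosed_discrete _).preimage (continuous_apply n)).inter ?_
  refine isClosed_biInter fun w _ => isClosed_iInter fun n => isClosed_compl_iff.2 ?_
  exact isOpen_iInter_of_finite fun i => (isOpen_discrete _).preimage (continuous_apply _)

lemma bv_cont {β : ℝ} (hβ : β ∈ Set.Ioo (1 : ℝ) 2) :
    ContinuousOn (betaVal β) {a | ∀ n, a n ≤ 1} := by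
  have h1 : (0 : ℝ) < β := by linarith [hβ.1]
  have hc : Continuous (fun a : ℕ → ℕ => ∑' n : ℕ, ((min (a n) 1 : ℕ) : ℝ) / β ^ (n + 1)) := by
    refine continuous_tsum (u := fun n => ((1 : ℕ) : ℝ) / β ^ (n + 1)) (fun n => ?_)
      (bv_summable hβ (a := fun _ => 1) (fun _ => le_rfl)) (fun n a => ?_)
    · exact (continuous_of_discreteTopology
        (f := fun k : ℕ => ((min k 1 : ℕ) : ℝ) / β ^ (n + 1))).comp (continuous_apply n)
    · rw [Real.norm_of_nonneg (by positivity)]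
      gcongr
      exact min_le_right _ _
  refine hc.continuousOn.congr (fun a ha => ?_)
  unfold betaVal
  refine tsum_congr fun n => ?_
  rw [min_eq_left (ha n)]

lemma sft_of_compact {β : ℝ} (hβ : β ∈ Set.Ioo (1 : ℝ) 2) (hK : IsCompact (UTilde β)) :
    IsSFT01 (UTilde β) := by
  have h1 : (0 : ℝ) < β := by linarith [hβ.1]
  have hP : IsCompact (betaVal β '' UTilde β) :=
    hK.image_of_continuousOn ((bv_cont hβ).mono fun a ha => ha.1)
  have hdisj : Disjoint (betaVal β '' UTilde β) (Set.Icc (1 / β) (1 / (β - 1) / β)) := by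
    rw [Set.disjoint_left]
    rintro _ ⟨a, ha, rfl⟩
    exact U_switch hβ ha
  obtain ⟨δ, hδ, hd⟩ := Metric.exists_pos_forall_lt_edist hP isClosed_Icc hdisj
  obtain ⟨m, hm⟩ : ∃ m : ℕ, (β⁻¹) ^ m * (1 / (β - 1)) < δ := by
    have := (tendsto_pow_atTop_nhds_zero_of_lt_one (r := β⁻¹) (by positivity)
        (inv_lt_one_of_one_lt₀ hβ.1)).mul_const (1 / (β - 1))
    rw [zero_mul] at this
    exact (this.eventually (gt_mem_nhds (by exact_mod_cast hδ))).exists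
  let F : Set (List ℕ) := {w | ∃ f : Fin m → Fin 2, List.ofFn (fun i => (f i).val) = w ∧
    ∀ u ∈ UTilde β, ¬ OccursAt w u 0}
  have occ : ∀ (f : Fin m → Fin 2) (x : ℕ → ℕ) (n : ℕ),
      OccursAt (List.ofFn (fun i => (f i).val)) x n ↔ ∀ i : Fin m, x (n + i) = (f i).val := by
    intro f x n
    unfold OccursAt
    constructor
    · intro h i
      have := h ⟨i.1, by simp⟩
      simpa using this
    · intro h i
      have := h ⟨i.1, by simpa using i.2⟩
      simpa using this
  refine ⟨F, (Set.finite_range (fun f : Fin m → Fin 2 => List.ofFn (fun i => (f i).val))).subset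
    (fun w hw => ⟨hw.choose, hw.choose_spec.1⟩), ?_⟩
  ext x
  constructor
  · intro hx
    refine ⟨hx.1, ?_⟩
    rintro w ⟨f, -, hf⟩ n ho
    refine hf _ (U_shift_n hβ n hx) (fun i => ?_)
    simpa using ho i
  · rintro ⟨hx, hF⟩
    refine U_of_switch hβ hx (fun n hn => ?_)
    let f : Fin m → Fin 2 := fun i => ⟨x (n + i), by have := hx (n + i); omega⟩
    have hnF : List.ofFn (fun i => (f i).val) ∉ F := fun h => hF _ h n ((occ f x n).2 fun i => rfl)
    have : ∃ u ∈ UTilde β, OccursAt (List.ofFn (fun i => (f i).val)) u 0 := by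
      by_contra hcon
      push Not at hcon
      exact hnF ⟨f, rfl, hcon⟩
    obtain ⟨u, hu, ho⟩ := this
    rw [occ] at ho
    have hcl := bv_close hβ m hu.1 (b := fun k => x (n + k)) (fun k => hx _)
      (fun i hi => by simpa [f] using ho ⟨i, hi⟩)
    have h3 := hd _ ⟨u, hu, rfl⟩ _ hn
    rw [edist_nndist, ENNReal.coe_lt_coe, ← NNReal.coe_lt_coe, coe_nndist, Real.dist_eq] at h3
    linarith

/-- `Ũ_β` is a subshift of finite type iff it is a sofic shift. -/
theorem statement5 (β : ℝ) (hβ : β ∈ Set.Ioo (1 : ℝ) 2) :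
    IsSFT01 (UTilde β) ↔ IsSofic01 (UTilde β) := by
  constructor
  · rintro ⟨F, hF, hU⟩
    refine ⟨2, UTilde β, id, ⟨F, hF, ?_⟩, continuousOn_id, Set.image_id _, fun _ _ => rfl⟩
    rw [hU]
    ext x
    simp only [Set.mem_setOf_eq, Nat.lt_succ_iff]
  · rintro ⟨N, X, φ, hX, hc, hU, -⟩
    apply sft_of_compact hβ
    rw [← hU]
    exact (sft_compact hX).image_of_continuousOn hc
end

section
/- For n ≥ 3 let β_n ∈ (1,2) be the multinacci number of order n, i.e. the unique root in (1,2) of x^n = x^{n−1} + x^{n−2} + ⋯ + x + 1 (with β_2 the golden mean (1+√5)/2). Then the Hausdorff dimension of the univoque set satisfies dim_H(U_{β_n}) = log β_{n−1} / log β_n. -/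
/-- The univoque set `U_β`: points of `[0, 1/(β-1)]` with a unique β-expansion. -/
def Uset (β : ℝ) : Set ℝ :=
  {x | x ∈ Set.Icc 0 (1 / (β - 1)) ∧
    ∃! a : ℕ → ℕ, (∀ n, a n ≤ 1) ∧ betaVal β a = x}

namespace MultiUniv

open Filter Topology

lemma hasSum_ones {β : ℝ} (hβ : 1 < β) :
    HasSum (fun i : ℕ => (1 : ℝ) / β ^ (i + 1)) (1 / (β - 1)) := by
  have h0 : (0 : ℝ) < β := by linarith
  have h := (hasSum_geometric_of_lt_one (inv_nonneg.2 h0.le) (inv_lt_one_of_one_lt₀ hβ)).mul_left β⁻¹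
  have e1 : (fun i : ℕ => (1 : ℝ) / β ^ (i + 1)) = fun i => β⁻¹ * β⁻¹ ^ i := by
    funext i
    rw [← pow_succ', inv_pow, one_div]
  have e2 : 1 / (β - 1) = β⁻¹ * (1 - β⁻¹)⁻¹ := by
    have : β - 1 ≠ 0 := by linarith
    have h2 : 1 - β⁻¹ ≠ 0 := by
      have := inv_lt_one_of_one_lt₀ hβ
      linarith
    field_simp
  rw [e1, e2]
  exact h

lemma summ {β : ℝ} (hβ : 1 < β) {a : ℕ → ℕ} (ha : ∀ n, a n ≤ 1) :
    Summable (fun i : ℕ => (a i : ℝ) / β ^ (i + 1)) := by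
  have h0 : (0 : ℝ) < β := by linarith
  refine Summable.of_nonneg_of_le (fun i => by positivity) (fun i => ?_) (hasSum_ones hβ).summable
  have : (a i : ℝ) ≤ 1 := by exact_mod_cast ha i
  gcongr

lemma val_nonneg {β : ℝ} (hβ : 1 < β) (a : ℕ → ℕ) : 0 ≤ betaVal β a := by
  have h0 : (0 : ℝ) < β := by linarith
  exact tsum_nonneg (fun i => by positivity)

lemma val_le {β : ℝ} (hβ : 1 < β) {a : ℕ → ℕ} (ha : ∀ n, a n ≤ 1) :
    betaVal β a ≤ 1 / (β - 1) := by
  have h0 : (0 : ℝ) < β := by linarith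
  rw [← (hasSum_ones hβ).tsum_eq]
  refine (summ hβ ha).tsum_le_tsum (fun i => ?_) (hasSum_ones hβ).summable
  have : (a i : ℝ) ≤ 1 := by exact_mod_cast ha i
  gcongr

lemma val_split {β : ℝ} (hβ : 1 < β) {a : ℕ → ℕ} (ha : ∀ n, a n ≤ 1) (p : ℕ) :
    betaVal β a = ∑ i ∈ Finset.range p, (a i : ℝ) / β ^ (i + 1)
      + betaVal β (fun i => a (p + i)) / β ^ p := by
  have h0 : (0 : ℝ) < β := by linarith
  unfold betaVal
  rw [← (summ hβ ha).sum_add_tsum_nat_add p, ← tsum_div_const]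
  congr 2
  funext i
  simp only [add_comm p i]
  rw [div_div, ← pow_add]
  congr 2
  ring

lemma val_head {β : ℝ} (hβ : 1 < β) {a : ℕ → ℕ} (ha : ∀ n, a n ≤ 1) :
    betaVal β a = ((a 0 : ℝ) + betaVal β (fun i => a (1 + i))) / β := by
  rw [val_split hβ ha 1]
  simp [add_div]

lemma val_compl {β : ℝ} (hβ : 1 < β) {a : ℕ → ℕ} (ha : ∀ n, a n ≤ 1) :
    betaVal β (fun i => 1 - a i) = 1 / (β - 1) - betaVal β a := by
  unfold betaVal
  rw [← (hasSum_ones hβ).tsum_eq, ← (hasSum_ones hβ).summable.tsum_sub (summ hβ ha)]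
  congr 1
  funext i
  rw [Nat.cast_sub (ha i), Nat.cast_one, sub_div]

/-- two sequences agreeing up to `k` have the same tail difference -/
lemma val_sub {β : ℝ} (hβ : 1 < β) {a b : ℕ → ℕ} (ha : ∀ n, a n ≤ 1) (hb : ∀ n, b n ≤ 1) (k : ℕ)
    (h : ∀ i < k, a i = b i) :
    betaVal β b - betaVal β a
      = (betaVal β (fun i => b (k + i)) - betaVal β (fun i => a (k + i))) / β ^ k := by
  rw [val_split hβ ha k, val_split hβ hb k]
  have : ∑ i ∈ Finset.range k, (a i : ℝ) / β ^ (i + 1)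
      = ∑ i ∈ Finset.range k, (b i : ℝ) / β ^ (i + 1) :=
    Finset.sum_congr rfl (fun i hi => by rw [h i (Finset.mem_range.1 hi)])
  rw [this]
  ring

lemma root_sum {β : ℝ} (hβ : 1 < β) {n : ℕ} (h : β ^ n = ∑ i ∈ Finset.range n, β ^ i) :
    ∑ i ∈ Finset.range n, (1 : ℝ) / β ^ (i + 1) = 1 := by
  have h0 : (0 : ℝ) < β := by linarith
  have h1 : β ^ n ≠ 0 := by positivity
  have e : (1 : ℝ) = (∑ i ∈ Finset.range n, β ^ i) / β ^ n := by rw [← h, div_self h1]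
  refine Eq.trans ?_ e.symm
  rw [Finset.sum_div, ← Finset.sum_range_reflect]
  refine Finset.sum_congr rfl (fun i hi => ?_)
  have hi := Finset.mem_range.1 hi
  rw [div_eq_div_iff (by positivity) (by positivity), one_mul, ← pow_add]
  congr 1
  omega

/-- no `n` consecutive ones implies value at most one -/
lemma val_le_one_aux {β : ℝ} (hβ : 1 < β) {n : ℕ}
    (h : ∑ i ∈ Finset.range n, (1 : ℝ) / β ^ (i + 1) = 1) (k : ℕ) :
    ∀ a : ℕ → ℕ, (∀ i, a i ≤ 1) → (∀ p, ¬ ∀ i < n, a (p + i) = 1) →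
      betaVal β a ≤ 1 + 1 / (β - 1) / β ^ k := by
  have h0 : (0 : ℝ) < β := by linarith
  have h2 : (0 : ℝ) < β - 1 := by linarith
  induction k with
  | zero => 
    intro a ha _
    have := val_le hβ ha
    simp at *
    linarith
  | succ k ih =>
    intro a ha hp
    have hex : ∃ i, i < n ∧ a i = 0 := by
      have := hp 0
      push Not at this
      obtain ⟨i, hi, hi'⟩ := this
      rw [zero_add] at hi'
      have := ha i
      exact ⟨i, hi, by omega⟩
    classical
    set j := Nat.find hex with hj
    obtain ⟨hjn, hj0⟩ := Nat.find_spec hex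
    have hmin : ∀ i < j, a i = 1 := by
      intro i hi
      have := Nat.find_min hex hi
      have := ha i
      have : i < n := by omega
      grind
    rw [val_split hβ ha (j + 1), Finset.sum_range_succ, ← hj] at *
    rw [hj0]
    have hs : ∑ i ∈ Finset.range j, (a i : ℝ) / β ^ (i + 1)
        = ∑ i ∈ Finset.range j, (1 : ℝ) / β ^ (i + 1) :=
      Finset.sum_congr rfl (fun i hi => by rw [hmin i (Finset.mem_range.1 hi), Nat.cast_one])
    have ht := ih (fun i => a (j + 1 + i)) (fun i => ha _) (fun p => by
      have := hp (j + 1 + p)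
      simpa [add_assoc] using this)
    have hle : ∑ i ∈ Finset.range (j + 1), (1 : ℝ) / β ^ (i + 1) ≤ 1 := by
      refine le_trans ?_ h.le
      exact Finset.sum_le_sum_of_subset_of_nonneg
        (Finset.range_mono hjn) (fun i _ _ => by positivity)
    rw [Finset.sum_range_succ] at hle
    have h3 : betaVal β (fun i => a (j + 1 + i)) / β ^ (j + 1)
        ≤ (1 + 1 / (β - 1) / β ^ k) / β ^ (j + 1) := by gcongr
    have h4 : 1 / (β - 1) / β ^ k / β ^ (j + 1) ≤ 1 / (β - 1) / β ^ (k + 1) := by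
      rw [div_div, ← pow_add]
      have : β ^ (k + 1) ≤ β ^ (k + (j + 1)) := pow_le_pow_right₀ hβ.le (by omega)
      gcongr
    rw [hs]
    rw [add_div] at h3
    simp only [Nat.cast_zero, zero_div]
    linarith

lemma val_le_one {β : ℝ} (hβ : 1 < β) {n : ℕ}
    (h : ∑ i ∈ Finset.range n, (1 : ℝ) / β ^ (i + 1) = 1) {a : ℕ → ℕ} (ha : ∀ i, a i ≤ 1)
    (hp : ∀ p, ¬ ∀ i < n, a (p + i) = 1) : betaVal β a ≤ 1 := by
  have hl : Tendsto (fun k : ℕ => 1 + 1 / (β - 1) / β ^ k) atTop (𝓝 (1 + 0)) :=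
    tendsto_const_nhds.add
      (tendsto_const_nhds.div_atTop (tendsto_pow_atTop_atTop_of_one_lt hβ))
  rw [add_zero] at hl
  exact ge_of_tendsto' hl (fun k => val_le_one_aux hβ h k a ha hp)

/-- `n` leading ones give value at least one -/
lemma one_le_val {β : ℝ} (hβ : 1 < β) {n : ℕ}
    (h : ∑ i ∈ Finset.range n, (1 : ℝ) / β ^ (i + 1) = 1) {a : ℕ → ℕ} (ha : ∀ i, a i ≤ 1)
    (hp : ∀ i < n, a i = 1) : 1 ≤ betaVal β a := by
  have h0 : (0 : ℝ) < β := by linarith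
  rw [val_split hβ ha n, ← h]
  have hs : ∑ i ∈ Finset.range n, (a i : ℝ) / β ^ (i + 1)
        = ∑ i ∈ Finset.range n, (1 : ℝ) / β ^ (i + 1) :=
      Finset.sum_congr rfl (fun i hi => by rw [hp i (Finset.mem_range.1 hi), Nat.cast_one])
  rw [hs]
  have := val_nonneg hβ (fun i => a (n + i))
  have : 0 ≤ betaVal β (fun i => a (n + i)) / β ^ n := by positivity
  linarith

/-- 0-1 sequences with no run of length `n`. -/
def Good (n : ℕ) (a : ℕ → ℕ) : Prop :=
  (∀ i, a i ≤ 1) ∧ ∀ p, (¬ ∀ i < n, a (p + i) = 1) ∧ ¬ ∀ i < n, a (p + i) = 0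

lemma Good.shift {n : ℕ} {a : ℕ → ℕ} (h : Good n a) (k : ℕ) : Good n (fun i => a (k + i)) :=
  ⟨fun i => h.1 _, fun p => by simpa [add_assoc] using h.2 (k + p)⟩

lemma Good.compl {n : ℕ} {a : ℕ → ℕ} (h : Good n a) : Good n (fun i => 1 - a i) := by
  refine ⟨fun i => by simp, fun p => ⟨fun hh => (h.2 p).2 fun i hi => ?_,
    fun hh => (h.2 p).1 fun i hi => ?_⟩⟩
  · have := hh i hi
    simp only at this
    omega
  · have := hh i hi
    have := h.1 (p + i)
    simp only at *
    omega

lemma Good.val_le_one {β : ℝ} (hβ : 1 < β) {n : ℕ}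
    (h : ∑ i ∈ Finset.range n, (1 : ℝ) / β ^ (i + 1) = 1) {a : ℕ → ℕ} (ha : Good n a) :
    betaVal β a ≤ 1 := MultiUniv.val_le_one hβ h ha.1 (fun p => (ha.2 p).1)

lemma Good.le_val {β : ℝ} (hβ : 1 < β) {n : ℕ}
    (h : ∑ i ∈ Finset.range n, (1 : ℝ) / β ^ (i + 1) = 1) {a : ℕ → ℕ} (ha : Good n a) :
    1 / (β - 1) - 1 ≤ betaVal β a := by
  have := ha.compl.val_le_one hβ h
  rw [val_compl hβ ha.1] at this
  linarith

/-- separation -/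
lemma sep {β : ℝ} (hβ : 1 < β) {n : ℕ}
    (h : ∑ i ∈ Finset.range n, (1 : ℝ) / β ^ (i + 1) = 1) {a b : ℕ → ℕ} (ha : Good n a)
    (hb : Good n b) (k : ℕ) (hk : ∀ i < k, a i = b i) (hka : a k = 0) (hkb : b k = 1) :
    (1 / (β - 1) - 1) / β / β ^ k ≤ betaVal β b - betaVal β a := by
  have h0 : (0 : ℝ) < β := by linarith
  rw [val_sub hβ ha.1 hb.1 k hk, val_head hβ (hb.shift k).1, val_head hβ (ha.shift k).1]
  have h1 := ((ha.shift k).shift 1).val_le_one hβ h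
  have h2 := ((hb.shift k).shift 1).le_val hβ h
  rw [← sub_div]
  simp only [add_zero, hka, hkb]
  refine div_le_div_of_nonneg_right (div_le_div_of_nonneg_right ?_ h0.le) (by positivity)
  push_cast
  linarith

lemma first_diff {a b : ℕ → ℕ} (h : a ≠ b) : ∃ k, (∀ i < k, a i = b i) ∧ a k ≠ b k := by
  classical
  have hex : ∃ k, a k ≠ b k := Function.ne_iff.1 h
  refine ⟨Nat.find hex, fun i hi => ?_, Nat.find_spec hex⟩
  simpa using Nat.find_min hex hi

lemma sep' {β : ℝ} (hβ : 1 < β) {n : ℕ}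
    (h : ∑ i ∈ Finset.range n, (1 : ℝ) / β ^ (i + 1) = 1) {a b : ℕ → ℕ} (ha : Good n a)
    (hb : Good n b) (k : ℕ) (hk : ∀ i < k, a i = b i) (hne : a k ≠ b k) :
    (1 / (β - 1) - 1) / β / β ^ k ≤ |betaVal β a - betaVal β b| := by
  have h1 := ha.1 k
  have h2 := hb.1 k
  rcases (show (a k = 0 ∧ b k = 1) ∨ (a k = 1 ∧ b k = 0) by omega) with h3 | h3
  · rw [abs_sub_comm]
    exact (sep hβ h ha hb k hk h3.1 h3.2).trans (le_abs_self _)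
  · exact (sep hβ h hb ha k (fun i hi => (hk i hi).symm) h3.2 h3.1).trans (le_abs_self _)

/-- values of good sequences starting with `0` -/
def KSet (β : ℝ) (n : ℕ) : Set ℝ := betaVal β '' {a | Good n a ∧ a 0 = 0}

lemma KSet_sub {β : ℝ} (hβ : 1 < β) (n : ℕ) :
    KSet β n ⊆ ⋃ j : Fin (n - 1),
      (fun x : ℝ => (1 / (β - 1) - x) / β ^ (j.1 + 1)) '' KSet β n := by
  rintro x ⟨a, ⟨hg, ha0⟩, rfl⟩
  have hex : ∃ i, i < n ∧ a i = 1 := by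
    have := (hg.2 0).2
    push Not at this
    obtain ⟨i, hi, hi'⟩ := this
    rw [zero_add] at hi'
    have := hg.1 i
    exact ⟨i, hi, by omega⟩
  classical
  obtain ⟨j, hj, hmin⟩ : ∃ j, (j < n ∧ a j = 1) ∧ ∀ i < j, ¬ (i < n ∧ a i = 1) :=
    ⟨Nat.find hex, Nat.find_spec hex, fun i hi => Nat.find_min hex hi⟩
  have hj0 : j ≠ 0 := by
    rintro rfl
    omega
  have hz : ∀ i < j, a i = 0 := by
    intro i hi
    have := hmin i hi
    have := hg.1 i
    have : i < n := by omega
    grind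
  refine Set.mem_iUnion.2 ⟨⟨j - 1, by omega⟩, betaVal β (fun i => 1 - a (j + i)),
    ⟨_, ⟨(hg.shift j).compl, by simp [hj.2]⟩, rfl⟩, ?_⟩
  have e : j - 1 + 1 = j := by omega
  simp only [e]
  rw [val_compl hβ (hg.shift j).1, val_split hβ hg.1 j]
  have : ∑ i ∈ Finset.range j, (a i : ℝ) / β ^ (i + 1) = 0 :=
    Finset.sum_eq_zero (fun i hi => by rw [hz i (Finset.mem_range.1 hi)]; simp)
  rw [this]
  ring

open scoped NNReal ENNReal

lemma lip_affine (c d : ℝ) : LipschitzWith ‖d‖₊ (fun x : ℝ => c + d * x) := by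
  refine LipschitzWith.of_dist_le_mul (fun x y => ?_)
  rw [Real.dist_eq, Real.dist_eq, show c + d * x - (c + d * y) = d * (x - y) by ring, abs_mul]
  simp

/-- covers of K -/
lemma KSet_cover {β γ r : ℝ} (hβ : 1 < β) (hr : 0 < r) (hγ : 1 < γ) (hrγ : β ^ r = γ) (n : ℕ)
    (h : ∑ i ∈ Finset.range (n - 1), (1 : ℝ) / γ ^ (i + 1) = 1) (k : ℕ) :
    ∃ (ι : Type) (_ : Fintype ι) (t : ι → Set ℝ), KSet β n ⊆ ⋃ i, t i ∧
      (∀ i, Metric.ediam (t i) ≤ ENNReal.ofReal (1 / (β - 1) / β ^ k)) ∧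
      ∑ i, Metric.ediam (t i) ^ r ≤ ENNReal.ofReal (1 / (β - 1)) ^ r := by
  have h0 : (0 : ℝ) < β := by linarith
  have h1 : (0 : ℝ) < β - 1 := by linarith
  induction k with
  | zero =>
    have hd : Metric.ediam (KSet β n) ≤ ENNReal.ofReal (1 / (β - 1)) := by
      have : KSet β n ⊆ Set.Icc 0 (1 / (β - 1)) := by
        rintro x ⟨a, ⟨hg, ha0⟩, rfl⟩
        exact ⟨val_nonneg hβ a, val_le hβ hg.1⟩
      refine (Metric.ediam_mono this).trans ?_
      rw [Real.ediam_Icc, sub_zero]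
    refine ⟨Unit, inferInstance, fun _ => KSet β n, ?_, ?_, ?_⟩
    · intro x hx
      simpa using hx
    · simpa using hd
    · simpa using ENNReal.rpow_le_rpow hd hr.le
  | succ k ih =>
    obtain ⟨ι, _, t, ht1, ht2, ht3⟩ := ih
    have hdiam : ∀ (j : ℕ) (s : Set ℝ),
        Metric.ediam ((fun x : ℝ => (1 / (β - 1) - x) / β ^ (j + 1)) '' s)
          ≤ ENNReal.ofReal (1 / β ^ (j + 1)) * Metric.ediam s := by
      intro j s
      have e : (fun x : ℝ => (1 / (β - 1) - x) / β ^ (j + 1))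
          = fun x => (1 / (β - 1)) / β ^ (j + 1) + (- (1 / β ^ (j + 1))) * x := by
        funext x
        ring
      rw [e]
      refine ((lip_affine _ _).ediam_image_le s).trans (le_of_eq ?_)
      congr 1
      rw [ENNReal.ofReal, nnnorm_neg]
      congr 1
      rw [Real.toNNReal_eq_nnnorm_of_nonneg (by positivity)]
    refine ⟨Fin (n - 1) × ι, inferInstance,
      fun q => (fun x : ℝ => (1 / (β - 1) - x) / β ^ (q.1.1 + 1)) '' t q.2, ?_, ?_, ?_⟩
    · intro x hx
      obtain ⟨j, y, hy, hyx⟩ := Set.mem_iUnion.1 (KSet_sub hβ n hx)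
      obtain ⟨i, hi⟩ := Set.mem_iUnion.1 (ht1 hy)
      exact Set.mem_iUnion.2 ⟨(j, i), y, hi, hyx⟩
    · rintro ⟨j, i⟩
      refine (hdiam j (t i)).trans ?_
      refine (mul_le_mul_right (ht2 i) _).trans ?_
      rw [← ENNReal.ofReal_mul (by positivity)]
      refine ENNReal.ofReal_le_ofReal ?_
      have : β ^ (k + 1) ≤ β ^ (j.1 + 1 + k) := pow_le_pow_right₀ hβ.le (by omega)
      have h2 : 1 / β ^ (j.1 + 1) * (1 / (β - 1) / β ^ k) = 1 / (β - 1) / β ^ (j.1 + 1 + k) := by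
        rw [pow_add _ (j.1 + 1) k]
        field_simp
      rw [h2]
      gcongr
    · rw [Fintype.sum_prod_type]
      calc ∑ j : Fin (n - 1), ∑ i, Metric.ediam
            ((fun x : ℝ => (1 / (β - 1) - x) / β ^ (j.1 + 1)) '' t i) ^ r
          ≤ ∑ j : Fin (n - 1), ∑ i, ENNReal.ofReal (1 / γ ^ (j.1 + 1)) * Metric.ediam (t i) ^ r := by
            refine Finset.sum_le_sum fun j _ => Finset.sum_le_sum fun i _ => ?_
            refine (ENNReal.rpow_le_rpow (hdiam j (t i)) hr.le).trans (le_of_eq ?_)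
            rw [ENNReal.mul_rpow_of_nonneg _ _ hr.le,
              ENNReal.ofReal_rpow_of_nonneg (by positivity) hr.le]
            congr 2
            rw [Real.div_rpow (by positivity) (by positivity), Real.one_rpow, ← hrγ,
              ← Real.rpow_natCast, ← Real.rpow_natCast, ← Real.rpow_mul h0.le,
              ← Real.rpow_mul h0.le, mul_comm r]
        _ = (∑ j : Fin (n - 1), ENNReal.ofReal (1 / γ ^ (j.1 + 1)))
              * ∑ i, Metric.ediam (t i) ^ r := by
            rw [Finset.sum_mul_sum]
        _ = ∑ i, Metric.ediam (t i) ^ r := by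
            have hγ0 : 0 < γ := by linarith
            rw [← ENNReal.ofReal_sum_of_nonneg (fun j _ => by positivity),
              Fin.sum_univ_eq_sum_range (fun j => 1 / γ ^ (j + 1)), h]
            simp
        _ ≤ _ := ht3

lemma dimH_KSet_le {β γ r : ℝ} (hβ : 1 < β) (hr : 0 < r) (hγ : 1 < γ) (hrγ : β ^ r = γ) (n : ℕ)
    (h : ∑ i ∈ Finset.range (n - 1), (1 : ℝ) / γ ^ (i + 1) = 1) :
    dimH (KSet β n) ≤ ENNReal.ofReal r := by
  choose ι hι t h1 h2 h3 using KSet_cover hβ hr hγ hrγ n h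
  have hfin : MeasureTheory.Measure.hausdorffMeasure r (KSet β n) ≠ ∞ := by
    have hlim : Tendsto (fun k : ℕ => ENNReal.ofReal (1 / (β - 1) / β ^ k)) atTop (𝓝 0) := by
      rw [← ENNReal.ofReal_zero]
      exact ENNReal.tendsto_ofReal
        (tendsto_const_nhds.div_atTop (tendsto_pow_atTop_atTop_of_one_lt hβ))
    have := MeasureTheory.Measure.hausdorffMeasure_le_liminf_sum r (KSet β n) _ hlim t
      (Eventually.of_forall h2) (Eventually.of_forall h1)
    refine ne_top_of_le_ne_top (b := ENNReal.ofReal (1 / (β - 1)) ^ r) ?_ (this.trans ?_)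
    · exact ENNReal.rpow_ne_top_of_nonneg hr.le ENNReal.ofReal_ne_top
    · refine liminf_le_of_le (by isBoundedDefault) (fun b hb => ?_)
      obtain ⟨k, hk⟩ := hb.exists
      exact hk.trans (h3 k)
  have := dimH_le_of_hausdorffMeasure_ne_top (d := r.toNNReal) (s := KSet β n)
    (by rwa [Real.coe_toNNReal r hr.le])
  exact this

lemma swap0 {β : ℝ} (hβ : 1 < β) {n : ℕ}
    (h : ∑ i ∈ Finset.range n, (1 : ℝ) / β ^ (i + 1) = 1) {a b : ℕ → ℕ} (ha : ∀ i, a i ≤ 1)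
    (hb : ∀ i, b i ≤ 1) (ha0 : a 0 = 0) (hb0 : b 0 = 1) (ha1 : ∀ i < n, a (1 + i) = 1)
    (hb1 : ∀ i < n, b (1 + i) = 0) (hab : ∀ i, a (1 + (n + i)) = b (1 + (n + i))) :
    betaVal β b = betaVal β a := by
  rw [val_head hβ ha, val_head hβ hb, ha0, hb0, val_split hβ (fun i => ha (1 + i)) n,
    val_split hβ (fun i => hb (1 + i)) n]
  have e1 : ∑ i ∈ Finset.range n, (a (1 + i) : ℝ) / β ^ (i + 1) = 1 := by
    refine Eq.trans ?_ h
    exact Finset.sum_congr rfl (fun i hi => by rw [ha1 i (Finset.mem_range.1 hi), Nat.cast_one])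
  have e2 : ∑ i ∈ Finset.range n, (b (1 + i) : ℝ) / β ^ (i + 1) = 0 :=
    Finset.sum_eq_zero (fun i hi => by rw [hb1 i (Finset.mem_range.1 hi)]; simp)
  rw [e1, e2]
  simp only [hab]
  push_cast
  ring

lemma no_word {β : ℝ} (hβ : 1 < β) {n : ℕ}
    (h : ∑ i ∈ Finset.range n, (1 : ℝ) / β ^ (i + 1) = 1) {a : ℕ → ℕ} (ha : a ∈ UTilde β)
    (p : ℕ) (hp : a p = 0) : ¬ ∀ i < n, a (p + 1 + i) = 1 := by
  intro hw
  obtain ⟨hd, hu⟩ := ha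
  set b : ℕ → ℕ := fun i => if i < p then a i else if i = p then 1 else
    if i < p + 1 + n then 0 else a i with hb
  have hbd : ∀ i, b i ≤ 1 := by
    intro i
    have := hd i
    simp only [hb]
    split_ifs <;> omega
  have hbp : b p = 1 := by simp [hb]
  have hv : betaVal β b = betaVal β a := by
    have h1 := val_sub hβ hd hbd p (fun i hi => by simp [hb, hi])
    have h2 : betaVal β (fun i => b (p + i)) = betaVal β (fun i => a (p + i)) := by
      refine swap0 hβ h (fun i => hd _) (fun i => hbd _) hp hbp ?_ ?_ ?_
      · intro i hi
        have := hw i hi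
        rwa [add_assoc] at this
      · intro i hi
        simp only [hb]
        rw [if_neg (by omega), if_neg (by omega), if_pos (by omega)]
      · intro i
        simp only [hb]
        rw [if_neg (by omega), if_neg (by omega), if_neg (by omega)]
    rw [h2, sub_self, zero_div] at h1
    linarith
  have := congrFun (hu b hbd hv) p
  omega

lemma utilde_compl {β : ℝ} (hβ : 1 < β) {a : ℕ → ℕ} (ha : a ∈ UTilde β) :
    (fun i => 1 - a i) ∈ UTilde β := by
  refine ⟨fun i => by simp, fun b hb hv => ?_⟩
  have hc : betaVal β (fun i => 1 - b i) = betaVal β a := by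
    rw [val_compl hβ ha.1] at hv
    rw [val_compl hβ hb]
    linarith
  have := ha.2 _ (fun i => by simp) hc
  funext i
  have h1 := congrFun this i
  have h2 := hb i
  omega

lemma window_one {β : ℝ} (hβ : 1 < β) {n : ℕ} (hn : 0 < n)
    (h : ∑ i ∈ Finset.range n, (1 : ℝ) / β ^ (i + 1) = 1) {a : ℕ → ℕ} (ha : a ∈ UTilde β)
    (p : ℕ) (hw : ∀ i < n, a (p + i) = 1) : ∀ j ≤ p, a j = 1 := by
  induction p with
  | zero =>
    intro j hj
    have := hw 0 hn
    have e : j = 0 := by omega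
    simpa [e] using this
  | succ p ih =>
    have hp : a p = 1 := by
      by_contra hne
      have := ha.1 p
      exact no_word hβ h ha p (by omega) hw
    have := ih (fun i hi => by
      rcases Nat.eq_zero_or_pos i with rfl | h0
      · simpa using hp
      · have := hw (i - 1) (by omega)
        rw [← this]
        congr 1
        omega)
    intro j hj
    rcases Nat.lt_or_ge j (p + 1) with h1 | h1
    · exact this j (by omega)
    · have e : j = p + 1 := by omega
      rw [e]
      simpa using hw 0 hn

lemma window_zero {β : ℝ} (hβ : 1 < β) {n : ℕ} (hn : 0 < n)
    (h : ∑ i ∈ Finset.range n, (1 : ℝ) / β ^ (i + 1) = 1) {a : ℕ → ℕ} (ha : a ∈ UTilde β)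
    (p : ℕ) (hw : ∀ i < n, a (p + i) = 0) : ∀ j ≤ p, a j = 0 := by
  intro j hj
  have := window_one hβ hn h (utilde_compl hβ ha) p (fun i hi => by simp [hw i hi]) j hj
  omega

/-- value of a finite set of digit positions -/
noncomputable def pre (β : ℝ) (s : Finset ℕ) : ℝ := ∑ i ∈ s, 1 / β ^ (i + 1)

lemma val_pre {β : ℝ} (hβ : 1 < β) {a : ℕ → ℕ} (ha : ∀ n, a n ≤ 1) (p : ℕ) :
    ∃ s, betaVal β a = pre β s + betaVal β (fun i => a (p + i)) / β ^ p := by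
  refine ⟨(Finset.range p).filter (fun i => a i = 1), ?_⟩
  rw [val_split hβ ha p]
  congr 1
  rw [pre, Finset.sum_filter]
  refine Finset.sum_congr rfl (fun i _ => ?_)
  have := ha i
  split_ifs with h
  · simp [h]
  · have e : a i = 0 := by omega
    simp [e]

lemma mem_Uset {β : ℝ} {x : ℝ} (hx : x ∈ Uset β) : ∃ a ∈ UTilde β, betaVal β a = x := by
  obtain ⟨_, a, ⟨h1, h2⟩, h3⟩ := hx
  exact ⟨a, ⟨h1, fun b hb hv => h3 b ⟨hb, hv.trans h2⟩⟩, h2⟩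

lemma Uset_of_UTilde {β : ℝ} (hβ : 1 < β) {a : ℕ → ℕ} (ha : a ∈ UTilde β) :
    betaVal β a ∈ Uset β :=
  ⟨⟨val_nonneg hβ a, val_le hβ ha.1⟩, a, ⟨ha.1, rfl⟩, fun b hb => ha.2 b hb.1 hb.2⟩

lemma Uset_sub {β : ℝ} (hβ : 1 < β) {n : ℕ} (hn : 0 < n)
    (h : ∑ i ∈ Finset.range n, (1 : ℝ) / β ^ (i + 1) = 1) :
    Uset β ⊆ {betaVal β (fun _ => 0), betaVal β (fun _ => 1)} ∪
      ⋃ q : ℕ × Finset ℕ, ((fun x : ℝ => pre β q.2 + 1 / β ^ q.1 * x) '' KSet β n ∪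
        (fun x : ℝ => (pre β q.2 + 1 / (β - 1) / β ^ q.1) + (- (1 / β ^ q.1)) * x) '' KSet β n) := by
  intro x hx
  obtain ⟨a, ha, rfl⟩ := mem_Uset hx
  by_cases hc : ∀ k, a k = a (k + 1)
  · left
    have h1 : ∀ k, a k = a 0 := by
      intro k
      induction k with
      | zero => rfl
      | succ k ih => rw [← hc k, ih]
    have h2 : a = fun _ => a 0 := funext h1
    have h3 := ha.1 0
    rcases (show a 0 = 0 ∨ a 0 = 1 by omega) with h4 | h4
    · left
      rw [h2, h4]
    · right
      rw [h2, h4]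
      rfl
  · right
    push Not at hc
    obtain ⟨k, hk⟩ := hc
    have hg : Good n (fun i => a (k + 1 + i)) := by
      refine ⟨fun i => ha.1 _, fun p => ⟨fun hw => hk ?_, fun hw => hk ?_⟩⟩
      · have := window_one hβ hn h ha (k + 1 + p) (by simpa [add_assoc] using hw)
        rw [this k (by omega), this (k + 1) (by omega)]
      · have := window_zero hβ hn h ha (k + 1 + p) (by simpa [add_assoc] using hw)
        rw [this k (by omega), this (k + 1) (by omega)]
    obtain ⟨s, hs⟩ := val_pre hβ ha.1 (k + 1)
    refine Set.mem_iUnion.2 ⟨(k + 1, s), ?_⟩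
    have h3 := ha.1 (k + 1)
    rcases (show a (k + 1) = 0 ∨ a (k + 1) = 1 by omega) with h4 | h4
    · left
      refine ⟨_, ⟨_, ⟨hg, h4⟩, rfl⟩, ?_⟩
      simp only
      rw [hs]
      ring
    · right
      refine ⟨_, ⟨_, ⟨hg.compl, by simp [h4]⟩, rfl⟩, ?_⟩
      simp only
      rw [hs, val_compl hβ hg.1]
      ring

lemma dimH_Uset_le {β : ℝ} (hβ : 1 < β) {n : ℕ} (hn : 0 < n)
    (h : ∑ i ∈ Finset.range n, (1 : ℝ) / β ^ (i + 1) = 1) :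
    dimH (Uset β) ≤ dimH (KSet β n) := by
  refine (dimH_mono (Uset_sub hβ hn h)).trans ?_
  rw [dimH_union, dimH_iUnion]
  refine max_le ?_ (iSup_le fun q => ?_)
  · rw [Set.Finite.dimH_zero (Set.toFinite _)]
    exact zero_le
  · rw [dimH_union]
    exact max_le ((lip_affine _ _).dimH_image_le _) ((lip_affine _ _).dimH_image_le _)

lemma utilde_of {β : ℝ} (hβ : 1 < β) {a : ℕ → ℕ} (ha : ∀ i, a i ≤ 1)
    (h0 : ∀ k, a k = 0 → betaVal β (fun i => a (k + 1 + i)) < 1)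
    (h1 : ∀ k, a k = 1 → 1 / (β - 1) - 1 < betaVal β (fun i => a (k + 1 + i))) :
    a ∈ UTilde β := by
  refine ⟨ha, fun b hb hv => ?_⟩
  by_contra hne
  obtain ⟨k, hk, hkne⟩ := first_diff (Ne.symm hne)
  have hβ0 : 0 < β := by linarith
  have hs := val_sub hβ ha hb k hk
  rw [hv, sub_self, val_head hβ (fun i => ha (k + i)), val_head hβ (fun i => hb (k + i)),
    ← sub_div, eq_comm, div_eq_zero_iff, div_eq_zero_iff] at hs
  have hs' := (hs.resolve_right (by positivity)).resolve_right hβ0.ne'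
  simp only [add_zero, ← add_assoc] at hs'
  have h2 := ha k
  have h3 := hb k
  have b1 := val_nonneg hβ (fun i => b (k + 1 + i))
  have b2 := val_le hβ (fun i => hb (k + 1 + i))
  rcases (show (a k = 0 ∧ b k = 1) ∨ (a k = 1 ∧ b k = 0) by omega) with h4 | h4
  · have := h0 k h4.1
    rw [h4.1, h4.2] at hs'
    push_cast at hs'
    linarith
  · have := h1 k h4.1
    rw [h4.1, h4.2] at hs'
    push_cast at hs'
    linarith

lemma KSet_sub_U {β : ℝ} (hβ : 1 < β) {n : ℕ}
    (h : ∑ i ∈ Finset.range n, (1 : ℝ) / β ^ (i + 1) = 1) :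
    KSet β n ⊆ Uset β ∪ (Set.range (fun q : ℕ × Finset ℕ => pre β q.2 + 1 / β ^ q.1) ∪
      Set.range (fun q : ℕ × Finset ℕ => pre β q.2 + (1 / (β - 1) - 1) / β ^ q.1)) := by
  rintro x ⟨a, ⟨hg, ha0⟩, rfl⟩
  by_cases hu : a ∈ UTilde β
  · exact Or.inl (Uset_of_UTilde hβ hu)
  · right
    by_contra hne
    apply hu
    refine utilde_of hβ hg.1 (fun k _ => lt_of_le_of_ne ((hg.shift (k + 1)).val_le_one hβ h) ?_)
      (fun k _ => lt_of_le_of_ne ((hg.shift (k + 1)).le_val hβ h) ?_)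
    · intro he
      obtain ⟨s, hs⟩ := val_pre hβ hg.1 (k + 1)
      exact hne (Or.inl ⟨(k + 1, s), by simp only; rw [hs, he]⟩)
    · intro he
      obtain ⟨s, hs⟩ := val_pre hβ hg.1 (k + 1)
      exact hne (Or.inr ⟨(k + 1, s), by simp only; rw [hs, he]⟩)

lemma dimH_KSet_le_U {β : ℝ} (hβ : 1 < β) {n : ℕ}
    (h : ∑ i ∈ Finset.range n, (1 : ℝ) / β ^ (i + 1) = 1) :
    dimH (KSet β n) ≤ dimH (Uset β) := by
  refine (dimH_mono (KSet_sub_U hβ h)).trans ?_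
  rw [dimH_union, Set.Countable.dimH_zero ((Set.countable_range _).union (Set.countable_range _))]
  simp

/-- greedy orbit -/
noncomputable def orb (γ y : ℝ) : ℕ → ℝ
  | 0 => y
  | k + 1 => Int.fract (γ * orb γ y k)

lemma orb_mem {γ y : ℝ} (hy : y ∈ Set.Ico (0 : ℝ) 1) (k : ℕ) : orb γ y k ∈ Set.Ico (0 : ℝ) 1 := by
  cases k with
  | zero => exact hy
  | succ k => exact ⟨Int.fract_nonneg _, Int.fract_lt_one _⟩

lemma orb_add (γ y : ℝ) (k j : ℕ) : orb γ y (k + j) = orb γ (orb γ y k) j := by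
  induction j with
  | zero => rfl
  | succ j ih => rw [← add_assoc, orb, orb, ih]

/-- greedy digits -/
noncomputable def dig (γ y : ℝ) (k : ℕ) : ℕ := ⌊γ * orb γ y k⌋.toNat

lemma dig_le {γ y : ℝ} (hγ : 1 < γ) (hγ2 : γ < 2) (hy : y ∈ Set.Ico (0 : ℝ) 1) (k : ℕ) :
    dig γ y k ≤ 1 := by
  obtain ⟨h1, h2⟩ := orb_mem (γ := γ) hy k
  have : ⌊γ * orb γ y k⌋ < 2 := by
    rw [Int.floor_lt]
    push_cast
    nlinarith
  unfold dig
  omega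

lemma dig_spec {γ y : ℝ} (hγ : 1 < γ) (hy : y ∈ Set.Ico (0 : ℝ) 1) (k : ℕ) :
    (dig γ y k : ℝ) + orb γ y (k + 1) = γ * orb γ y k := by
  obtain ⟨h1, h2⟩ := orb_mem (γ := γ) hy k
  have h3 : 0 ≤ ⌊γ * orb γ y k⌋ := Int.floor_nonneg.2 (by nlinarith)
  have h4 : ((dig γ y k : ℤ) : ℝ) = (⌊γ * orb γ y k⌋ : ℝ) := by
    rw [dig, Int.toNat_of_nonneg h3]
  rw [Int.cast_natCast] at h4
  rw [h4, orb, Int.floor_add_fract]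

lemma dig_sum {γ y : ℝ} (hγ : 1 < γ) (hy : y ∈ Set.Ico (0 : ℝ) 1) (k : ℕ) :
    ∑ i ∈ Finset.range k, (dig γ y i : ℝ) / γ ^ (i + 1) = y - orb γ y k / γ ^ k := by
  have h0 : 0 < γ := by linarith
  induction k with
  | zero => simp [orb]
  | succ k ih =>
    rw [Finset.sum_range_succ, ih]
    have := dig_spec hγ hy k
    have e : (dig γ y k : ℝ) = γ * orb γ y k - orb γ y (k + 1) := by linarith
    rw [e, pow_succ]
    field_simp
    ring

lemma val_dig {γ y : ℝ} (hγ : 1 < γ) (hγ2 : γ < 2) (hy : y ∈ Set.Ico (0 : ℝ) 1) :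
    betaVal γ (dig γ y) = y := by
  have h0 : 0 < γ := by linarith
  have h1 := (summ hγ (dig_le hγ hγ2 hy)).hasSum.tendsto_sum_nat
  refine tendsto_nhds_unique h1 ?_
  simp only [dig_sum hγ hy]
  have h2 : Tendsto (fun k => orb γ y k / γ ^ k) atTop (𝓝 0) := by
    refine squeeze_zero (g := fun k => 1 / γ ^ k)
      (fun k => div_nonneg (orb_mem hy k).1 (by positivity)) (fun k => ?_)
      (tendsto_const_nhds.div_atTop (tendsto_pow_atTop_atTop_of_one_lt hγ))
    have := (orb_mem (γ := γ) hy k).2.le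
    gcongr
  simpa using tendsto_const_nhds.sub h2

lemma dig_no_ones {γ y : ℝ} (hγ : 1 < γ) (hγ2 : γ < 2) (hy : y ∈ Set.Ico (0 : ℝ) 1) {m : ℕ}
    (h : ∑ i ∈ Finset.range m, (1 : ℝ) / γ ^ (i + 1) = 1) (p : ℕ) :
    ¬ ∀ i < m, dig γ y (p + i) = 1 := by
  intro hw
  have hy' := orb_mem (γ := γ) hy p
  have e : ∀ i, dig γ y (p + i) = dig γ (orb γ y p) i := by
    intro i
    rw [dig, dig, orb_add]
  have := one_le_val hγ h (dig_le hγ hγ2 hy') (fun i hi => by rw [← e]; exact hw i hi)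
  rw [val_dig hγ hγ2 hy'] at this
  exact absurd hy'.2 (by linarith)

/-- integrate -/
def integ (e : ℕ → ℕ) : ℕ → ℕ
  | 0 => 0
  | k + 1 => if e k = 1 then integ e k else 1 - integ e k

/-- differentiate -/
def der (a : ℕ → ℕ) (k : ℕ) : ℕ := if a k = a (k + 1) then 1 else 0

lemma der_le (a : ℕ → ℕ) (k : ℕ) : der a k ≤ 1 := by
  unfold der
  split_ifs <;> simp

lemma integ_le (e : ℕ → ℕ) (k : ℕ) : integ e k ≤ 1 := by
  induction k with
  | zero => simp [integ]
  | succ k ih => rw [integ]; split_ifs <;> omega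

lemma der_integ {e : ℕ → ℕ} (he : ∀ k, e k ≤ 1) : der (integ e) = e := by
  funext k
  have h1 := he k
  have h2 := integ_le e k
  rw [der, integ]
  split_ifs <;> omega

lemma good_integ {e : ℕ → ℕ} (he : ∀ k, e k ≤ 1) {n : ℕ} (h : ∀ p, ¬ ∀ i < n - 1, e (p + i) = 1) :
    Good n (integ e) := by
  have key : ∀ c p, ¬ ∀ i < n, integ e (p + i) = c := by
    intro c p hw
    apply h p
    intro i hi
    have h1 := hw i (by omega)
    have h2 := hw (i + 1) (by omega)
    rw [← der_integ he, der, add_assoc, h1, h2]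
    simp
  exact ⟨integ_le e, fun p => ⟨key 1 p, key 0 p⟩⟩

lemma holder_K {β γ r : ℝ} (hβ : 1 < β) (hβ2 : β < 2) (hr : 0 < r) (hγ : 1 < γ)
    (hrγ : β ^ r = γ) {n : ℕ}
    (h : ∑ i ∈ Finset.range n, (1 : ℝ) / β ^ (i + 1) = 1) :
    ∃ C : ℝ, 0 ≤ C ∧ ∀ a b, Good n a → Good n b →
      |betaVal γ (der a) - betaVal γ (der b)| ≤ C * |betaVal β a - betaVal β b| ^ r := by
  have hβ0 : 0 < β := by linarith
  have hγ0 : 0 < γ := by linarith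
  set c : ℝ := (1 / (β - 1) - 1) / β with hc
  have hc0 : 0 < c := by
    have : 1 < 1 / (β - 1) := by rw [lt_div_iff₀] <;> linarith
    rw [hc]
    exact div_pos (by linarith) hβ0
  have hcr : 0 < c ^ r := Real.rpow_pos_of_pos hc0 r
  have hγ1 : 0 < γ - 1 := by linarith
  refine ⟨1 / (γ - 1) * γ / c ^ r, by positivity, fun a b ha hb => ?_⟩
  by_cases hab : a = b
  · subst hab
    simp only [sub_self, abs_zero]
    have := Real.rpow_nonneg le_rfl r
    positivity
  obtain ⟨k, hk, hne⟩ := first_diff hab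
  have h1 := sep' hβ h ha hb k hk hne
  have h2 : (c / β ^ k) ^ r ≤ |betaVal β a - betaVal β b| ^ r :=
    Real.rpow_le_rpow (by positivity) h1 hr.le
  have h3 : (c / β ^ k) ^ r = c ^ r / γ ^ k := by
    rw [Real.div_rpow hc0.le (by positivity), ← hrγ,
              ← Real.rpow_natCast, ← Real.rpow_natCast, ← Real.rpow_mul hβ0.le,
              ← Real.rpow_mul hβ0.le, mul_comm r]
  have h4 : |betaVal γ (der a) - betaVal γ (der b)| ≤ 1 / (γ - 1) / γ ^ (k - 1) := by
    rw [abs_sub_comm, val_sub hγ (der_le a) (der_le b) (k - 1) (fun i hi => by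
      rw [der, der, hk i (by omega), hk (i + 1) (by omega)]), abs_div,
      abs_of_pos (pow_pos hγ0 _)]
    have b1 := val_nonneg hγ (fun i => der a (k - 1 + i))
    have b2 := val_le hγ (fun i => der_le a (k - 1 + i))
    have b3 := val_nonneg hγ (fun i => der b (k - 1 + i))
    have b4 := val_le hγ (fun i => der_le b (k - 1 + i))
    gcongr
    rw [abs_le]
    constructor <;> linarith
  have h5 : 1 / (γ - 1) / γ ^ (k - 1) ≤ 1 / (γ - 1) * γ / γ ^ k := by
    rw [mul_div_assoc, div_eq_mul_one_div]
    refine mul_le_mul_of_nonneg_left ?_ (by positivity)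
    rw [div_le_div_iff₀ (by positivity) (by positivity), one_mul, ← pow_succ']
    exact pow_le_pow_right₀ hγ.le (by omega)
  calc _ ≤ _ := h4.trans h5
    _ = 1 / (γ - 1) * γ / c ^ r * (c ^ r / γ ^ k) := by field_simp
    _ ≤ _ := by
      rw [← h3]
      gcongr

lemma val_inj {β : ℝ} (hβ : 1 < β) (hβ2 : β < 2) {n : ℕ}
    (h : ∑ i ∈ Finset.range n, (1 : ℝ) / β ^ (i + 1) = 1) {a b : ℕ → ℕ}
    (ha : Good n a) (hb : Good n b) (hab : betaVal β a = betaVal β b) : a = b := by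
  by_contra hne
  obtain ⟨k, hk, hkne⟩ := first_diff hne
  have h1 := sep' hβ h ha hb k hk hkne
  rw [hab, sub_self, abs_zero] at h1
  have : 1 < 1 / (β - 1) := by rw [lt_div_iff₀] <;> linarith
  have hβ0 : 0 < β := by linarith
  have : 0 < (1 / (β - 1) - 1) / β / β ^ k :=
    div_pos (div_pos (by linarith) hβ0) (by positivity)
  linarith

lemma le_dimH_KSet {β γ r : ℝ} (hβ : 1 < β) (hβ2 : β < 2) (hr : 0 < r) (hγ : 1 < γ) (hγ2 : γ < 2)
    (hrγ : β ^ r = γ) {n : ℕ}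
    (h : ∑ i ∈ Finset.range n, (1 : ℝ) / β ^ (i + 1) = 1)
    (h' : ∑ i ∈ Finset.range (n - 1), (1 : ℝ) / γ ^ (i + 1) = 1) :
    ENNReal.ofReal r ≤ dimH (KSet β n) := by
  classical
  obtain ⟨C, hC0, hC⟩ := holder_K hβ hβ2 hr hγ hrγ h
  have hex : ∀ x : ℝ, ∃ a : ℕ → ℕ, x ∈ KSet β n → Good n a ∧ betaVal β a = x := by
    intro x
    by_cases hx : x ∈ KSet β n
    · obtain ⟨a, ha, hax⟩ := hx
      exact ⟨a, fun _ => ⟨ha.1, hax⟩⟩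
    · exact ⟨fun _ => 0, fun hx' => absurd hx' hx⟩
  choose A hA using hex
  set f : ℝ → ℝ := fun x => betaVal γ (der (A x)) with hf
  have hhol : HolderOnWith C.toNNReal r.toNNReal f (KSet β n) := by
    intro x hx y hy
    obtain ⟨gx, vx⟩ := hA x hx
    obtain ⟨gy, vy⟩ := hA y hy
    have := hC _ _ gx gy
    rw [vx, vy] at this
    rw [edist_dist, edist_dist, Real.dist_eq, Real.dist_eq, Real.coe_toNNReal r hr.le,
      ENNReal.ofReal_rpow_of_nonneg (abs_nonneg _) hr.le]
    change _ ≤ ENNReal.ofReal C * _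
    rw [← ENNReal.ofReal_mul hC0]
    exact ENNReal.ofReal_le_ofReal this
  have himg : Set.Ico (0 : ℝ) 1 ⊆ f '' KSet β n := by
    intro y hy
    have hd := dig_le hγ hγ2 hy
    have hg : Good n (integ (dig γ y)) := good_integ hd (dig_no_ones hγ hγ2 hy h')
    have hk : betaVal β (integ (dig γ y)) ∈ KSet β n := ⟨_, ⟨hg, rfl⟩, rfl⟩
    refine ⟨_, hk, ?_⟩
    obtain ⟨g1, v1⟩ := hA _ hk
    simp only [hf]
    rw [val_inj hβ hβ2 h g1 hg v1, der_integ hd, val_dig hγ hγ2 hy]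
  have h1 : dimH (Set.Ico (0 : ℝ) 1) = 1 := by
    rw [Real.dimH_of_nonempty_interior]
    · simp
    · rw [interior_Ico]
      exact ⟨1 / 2, by norm_num, by norm_num⟩
  have h2 := (dimH_mono himg).trans (hhol.dimH_image_le (Real.toNNReal_pos.2 hr))
  rw [h1] at h2
  have hr' : (r.toNNReal : ℝ≥0∞) ≠ 0 := by
    simpa using hr
  rw [ENNReal.le_div_iff_mul_le (Or.inl hr') (Or.inl ENNReal.coe_ne_top), one_mul] at h2
  exact h2

end MultiUniv


/-- for the multinacci numbers `β_n` (`n ≥ 3`),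
`dim_H (U_{β_n}) = log β_{n-1} / log β_n`. -/
theorem statement6 (n : ℕ) (hn : 3 ≤ n) (βn βm : ℝ)
    (hβn : βn ∈ Set.Ioo (1 : ℝ) 2)
    (hβnroot : βn ^ n = ∑ i ∈ Finset.range n, βn ^ i)
    (hβm : βm ∈ Set.Ioo (1 : ℝ) 2)
    (hβmroot : βm ^ (n - 1) = ∑ i ∈ Finset.range (n - 1), βm ^ i) :
    dimH (Uset βn) = ENNReal.ofReal (Real.log βm / Real.log βn) := by

  have h1 := hβn.1
  have h2 := hβm.1
  have hlog : 0 < Real.log βn := Real.log_pos h1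
  have hr : 0 < Real.log βm / Real.log βn := div_pos (Real.log_pos h2) hlog
  have hrγ : βn ^ (Real.log βm / Real.log βn) = βm := by
    rw [Real.rpow_def_of_pos (by linarith), mul_div_cancel₀ _ hlog.ne',
      Real.exp_log (by linarith)]
  have e1 := MultiUniv.root_sum h1 hβnroot
  have e2 := MultiUniv.root_sum h2 hβmroot
  exact le_antisymm
    ((MultiUniv.dimH_Uset_le h1 (by omega) e1).trans
      (MultiUniv.dimH_KSet_le h1 hr h2 hrγ n e2))
    ((MultiUniv.le_dimH_KSet h1 hβn.2 hr h2 hβm.2 hrγ e1 e2).trans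
      (MultiUniv.dimH_KSet_le_U h1 e1))
end
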